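/- arXiv:1904.07713 — 9 statements merged into one kernel-verified Lean document; each statement's English description precedes it below -/
import Mathlib

section
/- Let n ≥ 1, a < −1 and b = √(a² − 1). Then there exists a smooth function u : ℝⁿ → ℝ with −(b+a)I < D²u(x) < (b−a)I for all x ∈ ℝⁿ, satisfying (√(a²+1)/(2b)) · Σ_{i=1}^n ln((b + a + λ_i(D²u(x)))/(b − a − λ_i(D²u(x)))) = −u(x) + (1/2)⟨x, Du(x)⟩ for all x ∈ ℝⁿ, such that u is NOT a quadratic polynomial. -/
open Real Filter Matrix
open scoped RealInnerProductSpace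

noncomputable section

/-- The Hessian matrix of `u` at `x`, with entries the second iterated derivatives
in the coordinate directions. -/
def Hess (n : ℕ) (u : EuclideanSpace ℝ (Fin n) → ℝ) (x : EuclideanSpace ℝ (Fin n)) :
    Matrix (Fin n) (Fin n) ℝ :=
  Matrix.of fun i j =>
    iteratedFDeriv ℝ 2 u x ![EuclideanSpace.single i 1, EuclideanSpace.single j 1]

open Classical in
/-- The eigenvalues of a real symmetric matrix (junk value `0` if not symmetric). -/
def eigs {n : ℕ} (A : Matrix (Fin n) (Fin n) ℝ) : Fin n → ℝ :=
  if h : A.IsHermitian then h.eigenvalues else 0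

/-- `u` is a quadratic polynomial:
`u x = (1/2)⟨x, A x⟩ + ⟨β, x⟩ + c` with `A` symmetric. -/
def IsQuadPoly (n : ℕ) (u : EuclideanSpace ℝ (Fin n) → ℝ) : Prop :=
  ∃ (A : Matrix (Fin n) (Fin n) ℝ) (β : EuclideanSpace ℝ (Fin n)) (c : ℝ), A.IsSymm ∧
    ∀ x, u x = (1/2) * (∑ i, ∑ j, A i j * x i * x j) + ⟪β, x⟫ + c

/-- the scalar nonlinearity -/
def sfun (a b : ℝ) (z : ℝ) : ℝ := -a - b + 2 * b * Real.sigmoid z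

/-- the vector field -/
def vf (a b c : ℝ) (t : ℝ) (y : ℝ × ℝ) : ℝ × ℝ :=
  (y.2, sfun a b (c * (t * y.2 / 2 - y.1)))

/-- clamping -/
def clampB (B p : ℝ) : ℝ := max (-B) (min B p)

/-- the truncated vector field -/
def vfB (a b c B : ℝ) (t : ℝ) (y : ℝ × ℝ) : ℝ × ℝ :=
  (clampB B y.2, sfun a b (c * (t * y.2 / 2 - y.1)))

lemma sigmoid_lip (x y : ℝ) : |Real.sigmoid x - Real.sigmoid y| ≤ |x - y| := by
  have h := Convex.norm_image_sub_le_of_norm_hasDerivWithin_le (f := Real.sigmoid)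
    (f' := fun x => Real.sigmoid x * (1 - Real.sigmoid x)) (C := 1) (s := Set.univ) (x := y) (y := x)
    (fun x _ => (Real.hasDerivAt_sigmoid x).hasDerivWithinAt) ?_ convex_univ trivial trivial
  · simpa using h
  · intro x _
    have h1 := Real.sigmoid_pos x
    have h2 := Real.sigmoid_lt_one x
    rw [Real.norm_eq_abs, abs_le]
    constructor <;> nlinarith

lemma sfun_lip {a b : ℝ} (hb : 0 < b) (x y : ℝ) : |sfun a b x - sfun a b y| ≤ 2 * b * |x - y| := by
  have : sfun a b x - sfun a b y = 2 * b * (Real.sigmoid x - Real.sigmoid y) := by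
    unfold sfun; ring
  rw [this, abs_mul, abs_of_pos (by positivity : 0 < 2 * b)]
  exact mul_le_mul_of_nonneg_left (sigmoid_lip x y) (by positivity)

lemma sfun_arg_lip {a b c N : ℝ} (hb : 0 < b) (hc : 0 < c) {t : ℝ} (ht : |t| ≤ N) (x y : ℝ × ℝ) :
    |sfun a b (c * (t * x.2 / 2 - x.1)) - sfun a b (c * (t * y.2 / 2 - y.1))|
      ≤ (2 * b * c * (N / 2 + 1)) * dist x y := by
  refine (sfun_lip hb _ _).trans ?_
  have e : c * (t * x.2 / 2 - x.1) - c * (t * y.2 / 2 - y.1)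
    = c * (t * (x.2 - y.2) / 2 - (x.1 - y.1)) := by ring
  rw [e, abs_mul, abs_of_pos hc]
  have h1 : |x.1 - y.1| ≤ dist x y := by rw [Prod.dist_eq]; exact le_max_left _ _
  have h2 : |x.2 - y.2| ≤ dist x y := by rw [Prod.dist_eq]; exact le_max_right _ _
  have h3 : |t * (x.2 - y.2) / 2 - (x.1 - y.1)| ≤ N * dist x y / 2 + dist x y := by
    refine (abs_sub _ _).trans ?_
    rw [abs_div, abs_mul, abs_two]
    gcongr
    exact (abs_nonneg t).trans ht
  calc 2 * b * (c * |t * (x.2 - y.2) / 2 - (x.1 - y.1)|)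
      ≤ 2 * b * (c * (N * dist x y / 2 + dist x y)) := by gcongr
    _ = _ := by ring

lemma vf_lip {a b c : ℝ} {N : NNReal} (hb : 0 < b) (hc : 0 < c) {t : ℝ} (ht : |t| ≤ N) :
    LipschitzWith (1 + Real.toNNReal (2 * b * c * (N / 2 + 1))) (vf a b c t) := by
  refine LipschitzWith.of_dist_le_mul fun x y => ?_
  have hp : 0 ≤ 2 * b * c * ((N : ℝ) / 2 + 1) := by positivity
  have hd : 0 ≤ dist x y := dist_nonneg
  push_cast
  rw [Real.coe_toNNReal _ hp, Prod.dist_eq (x := vf a b c t x)]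
  refine max_le ?_ ?_
  · have h2 : |x.2 - y.2| ≤ dist x y := by rw [Prod.dist_eq]; exact le_max_right _ _
    simp only [vf, Real.dist_eq]
    nlinarith
  · have := sfun_arg_lip (a := a) hb hc ht x y
    simp only [vf, Real.dist_eq]
    nlinarith

lemma clampB_lip (B x y : ℝ) : |clampB B x - clampB B y| ≤ |x - y| := by
  unfold clampB
  refine (abs_max_sub_max_le_max _ _ _ _).trans ?_
  simp only [sub_self, abs_zero]
  refine max_le (abs_nonneg _) ((abs_min_sub_min_le_max _ _ _ _).trans ?_)
  simp

lemma vfB_lip {a b c B : ℝ} {N : NNReal} (hb : 0 < b) (hc : 0 < c) {t : ℝ} (ht : |t| ≤ N) :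
    LipschitzWith (1 + Real.toNNReal (2 * b * c * (N / 2 + 1))) (vfB a b c B t) := by
  refine LipschitzWith.of_dist_le_mul fun x y => ?_
  have hp : 0 ≤ 2 * b * c * ((N : ℝ) / 2 + 1) := by positivity
  have hd : 0 ≤ dist x y := dist_nonneg
  push_cast
  rw [Real.coe_toNNReal _ hp, Prod.dist_eq (x := vfB a b c B t x)]
  refine max_le ?_ ?_
  · have h2 : |x.2 - y.2| ≤ dist x y := by rw [Prod.dist_eq]; exact le_max_right _ _
    have h3 := clampB_lip B x.2 y.2
    simp only [vfB, Real.dist_eq]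
    nlinarith
  · have := sfun_arg_lip (a := a) hb hc ht x y
    simp only [vfB, Real.dist_eq]
    nlinarith

lemma sfun_bounds {a b : ℝ} (hb : 0 < b) (z : ℝ) : -a - b < sfun a b z ∧ sfun a b z < b - a := by
  have h1 := Real.sigmoid_pos z
  have h2 := Real.sigmoid_lt_one z
  unfold sfun
  constructor <;> nlinarith

lemma local_exist {a b c : ℝ} (hb : 0 < b) (hba : b + a < 0) (hc : 0 < c) (N : NNReal) :
    ∃ α : ℝ → ℝ × ℝ, α 0 = (0, 1) ∧ ∀ t ∈ Set.Icc (-(N : ℝ)) N,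
      HasDerivWithinAt α (vf a b c t (α t)) (Set.Icc (-(N : ℝ)) N) t := by
  have hM : 0 ≤ b - a := by linarith
  set B : ℝ := 1 + (b - a) * N with hB
  have hB1 : 1 ≤ B := by have := mul_nonneg hM N.2; simp only [NNReal.val_eq_coe] at this; linarith
  set L : NNReal := Real.toNNReal (B + (b - a)) with hL
  have hLc : (L : ℝ) = B + (b - a) := Real.coe_toNNReal _ (by linarith)
  have h0 : (0 : ℝ) ∈ Set.Icc (-(N : ℝ)) N := by simp
  have hpl : IsPicardLindelof (vfB a b c B) (tmin := -(N : ℝ)) (tmax := N) ⟨0, h0⟩ (0, 1)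
      (L * N) 0 L (1 + Real.toNNReal (2 * b * c * (N / 2 + 1))) := by
    refine ⟨fun t ht => (vfB_lip hb hc (abs_le.2 ht)).lipschitzOnWith, ?_, ?_, ?_⟩
    · intro x _
      apply Continuous.continuousOn
      unfold vfB sfun
      have := continuous_sigmoid
      fun_prop
    · intro t ht x _
      have h1 := sfun_bounds (a := a) hb (c * (t * x.2 / 2 - x.1))
      rw [Prod.norm_def, hLc]
      refine max_le ?_ ?_
      · simp only [vfB, clampB, Real.norm_eq_abs, abs_le]
        constructor
        · have := le_max_left (-B) (min B x.2); linarith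
        · refine max_le (by linarith) ((min_le_left _ _).trans (by linarith))
      · simp only [vfB, Real.norm_eq_abs, abs_le]
        constructor <;> linarith
    · simp
  obtain ⟨α, hα0, hα⟩ := hpl.exists_eq_forall_mem_Icc_hasDerivWithinAt₀
  refine ⟨α, hα0, fun t ht => ?_⟩
  have hp : ∀ t ∈ Set.Icc (-(N : ℝ)) N, |(α t).2| ≤ B := by
    intro t ht
    have h := Convex.norm_image_sub_le_of_norm_hasDerivWithin_le (f := fun t => (α t).2)
      (f' := fun t => (vfB a b c B t (α t)).2) (C := b - a) (s := Set.Icc (-(N : ℝ)) N)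
      (x := 0) (y := t) (fun x hx => (hα x hx).snd) ?_ (convex_Icc _ _) h0 ht
    · have h0' : (α 0).2 = 1 := by rw [show α 0 = (0, 1) from hα0]
      simp only [h0', Real.norm_eq_abs, sub_zero] at h
      have h4 : |t| ≤ N := abs_le.2 ht
      have h5 : |(α t).2| ≤ |(α t).2 - 1| + |(1:ℝ)| := by
        simpa using abs_add_le ((α t).2 - 1) 1
      rw [abs_one] at h5
      have := mul_le_mul_of_nonneg_left h4 hM
      linarith
    · intro s _
      have h1 := sfun_bounds (a := a) hb (c * (s * (α s).2 / 2 - (α s).1))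
      simp only [vfB, Real.norm_eq_abs, abs_le]
      constructor <;> linarith
  have h6 := abs_le.1 (hp t ht)
  have h7 : vf a b c t (α t) = vfB a b c B t (α t) := by
    simp only [vf, vfB, clampB]
    rw [min_eq_right h6.2, max_eq_right h6.1]
  rw [h7]
  exact hα t ht

lemma global_exist {a b c : ℝ} (hb : 0 < b) (hba : b + a < 0) (hc : 0 < c) :
    ∃ α : ℝ → ℝ × ℝ, α 0 = (0, 1) ∧ ∀ t, HasDerivAt α (vf a b c t (α t)) t := by
  choose β hβ0 hβ using fun N : ℕ => local_exist hb hba hc (N : NNReal)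
  simp only [NNReal.coe_natCast] at hβ
  have hd : ∀ N : ℕ, ∀ t ∈ Set.Ioo (-(N : ℝ)) N, HasDerivAt (β N) (vf a b c t (β N t)) t :=
    fun N t ht => (hβ N t (Set.Ioo_subset_Icc_self ht)).hasDerivAt (Icc_mem_nhds ht.1 ht.2)
  have key : ∀ N M : ℕ, N ≤ M → ∀ t ∈ Set.Ioo (-(N : ℝ)) N, β N t = β M t := by
    intro N M hNM t ht
    have hN : (0 : ℝ) < N := by linarith [ht.1, ht.2]
    have hNM' : (N : ℝ) ≤ M := by exact_mod_cast hNM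
    refine ODE_solution_unique_of_mem_Ioo (v := vf a b c) (s := fun _ => Set.univ) (t₀ := 0)
      (a := -(N : ℝ)) (b := N) (K := 1 + Real.toNNReal (2 * b * c * (((N : NNReal) : ℝ) / 2 + 1)))
      ?_ (by simpa using hN) ?_ ?_ ?_ ht
    · intro t ht
      exact (vf_lip hb hc (abs_le.2 (by simpa using ⟨ht.1.le, ht.2.le⟩))).lipschitzOnWith
    · intro s hs
      exact ⟨hd N s hs, trivial⟩
    · intro s hs
      exact ⟨hd M s ⟨by linarith [hs.1], by linarith [hs.2]⟩, trivial⟩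
    · rw [hβ0, hβ0]
  have hidx : ∀ t : ℝ, t ∈ Set.Ioo (-((⌈|t|⌉₊ + 1 : ℕ) : ℝ)) ((⌈|t|⌉₊ + 1 : ℕ) : ℝ) := by
    intro t
    have := Nat.le_ceil |t|
    refine abs_lt.1 ?_
    push_cast
    linarith
  have heq : ∀ N : ℕ, ∀ t ∈ Set.Ioo (-(N : ℝ)) N, β (⌈|t|⌉₊ + 1) t = β N t := by
    intro N t ht
    rcases le_total (⌈|t|⌉₊ + 1) N with h | h
    · exact key _ _ h t (hidx t)
    · exact (key _ _ h t ht).symm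
  refine ⟨fun t => β (⌈|t|⌉₊ + 1) t, by simp [hβ0], fun t => ?_⟩
  refine (hd _ t (hidx t)).congr_of_eventuallyEq ?_
  filter_upwards [Ioo_mem_nhds (hidx t).1 (hidx t).2] with s hs
  exact heq _ s hs

lemma global_smooth {a b c : ℝ} {α : ℝ → ℝ × ℝ} (h : ∀ t, HasDerivAt α (vf a b c t (α t)) t) :
    ContDiff ℝ (⊤ : ℕ∞) α := by
  have hs : ContDiff ℝ (⊤ : ℕ∞) Real.sigmoid := contDiff_sigmoid.of_le (by simp)
  rw [contDiff_infty]
  intro n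
  induction n with
  | zero =>
    simp only [Nat.cast_zero, contDiff_zero]
    exact continuous_iff_continuousAt.2 fun t => (h t).continuousAt
  | succ n ih =>
    have : deriv α = fun t => vf a b c t (α t) := funext fun t => (h t).deriv
    push_cast
    refine contDiff_succ_iff_deriv.2 ⟨fun t => (h t).differentiableAt, by simp, ?_⟩
    rw [this]
    unfold vf sfun
    have hsn : ContDiff ℝ n Real.sigmoid := contDiff_infty.1 hs n
    fun_prop

lemma oneD {a b c : ℝ} (hb : 0 < b) (hba : b + a < 0) (hc : 0 < c) :
    ∃ f g : ℝ → ℝ, f 0 = 0 ∧ g 0 = 1 ∧ ContDiff ℝ (⊤ : ℕ∞) f ∧ (∀ t, HasDerivAt f (g t) t) ∧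
      ∀ t, HasDerivAt g (sfun a b (c * (t * g t / 2 - f t))) t := by
  obtain ⟨α, h0, h⟩ := global_exist hb hba hc
  refine ⟨fun t => (α t).1, fun t => (α t).2, by simp [h0], by simp [h0], ?_,
    fun t => (h t).fst, fun t => (h t).snd⟩
  exact (global_smooth h).fst

lemma u_hasFDerivAt {n : ℕ} {f g : ℝ → ℝ} (hf : ∀ t, HasDerivAt f (g t) t)
    (x : EuclideanSpace ℝ (Fin n)) :
    HasFDerivAt (fun x : EuclideanSpace ℝ (Fin n) => ∑ i, f (x i))
      (∑ i, g (x i) • (EuclideanSpace.proj i : EuclideanSpace ℝ (Fin n) →L[ℝ] ℝ)) x := by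
  refine HasFDerivAt.fun_sum fun i _ => ?_
  exact (hf (x i)).comp_hasFDerivAt x
    (EuclideanSpace.proj i : EuclideanSpace ℝ (Fin n) →L[ℝ] ℝ).hasFDerivAt

lemma u_hess {n : ℕ} {f g k : ℝ → ℝ} (hf : ∀ t, HasDerivAt f (g t) t)
    (hg : ∀ t, HasDerivAt g (k t) t) (x : EuclideanSpace ℝ (Fin n)) :
    Hess n (fun x : EuclideanSpace ℝ (Fin n) => ∑ i, f (x i)) x
      = Matrix.diagonal fun i => k (x i) := by
  have h1 : fderiv ℝ (fun x : EuclideanSpace ℝ (Fin n) => ∑ i, f (x i)) = fun x =>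
      ∑ i, g (x i) • (EuclideanSpace.proj i : EuclideanSpace ℝ (Fin n) →L[ℝ] ℝ) :=
    funext fun x => (u_hasFDerivAt hf x).fderiv
  have h2 : HasFDerivAt (fun x : EuclideanSpace ℝ (Fin n) =>
      ∑ i, g (x i) • (EuclideanSpace.proj i : EuclideanSpace ℝ (Fin n) →L[ℝ] ℝ))
      (∑ i, (k (x i) • (EuclideanSpace.proj i : EuclideanSpace ℝ (Fin n) →L[ℝ] ℝ)).smulRight
        (EuclideanSpace.proj i : EuclideanSpace ℝ (Fin n) →L[ℝ] ℝ)) x := by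
    refine HasFDerivAt.fun_sum fun i _ => ?_
    have h3 : HasFDerivAt (fun x : EuclideanSpace ℝ (Fin n) => g (x i))
        (k (x i) • (EuclideanSpace.proj i : EuclideanSpace ℝ (Fin n) →L[ℝ] ℝ)) x :=
      (hg (x i)).comp_hasFDerivAt x
        (EuclideanSpace.proj i : EuclideanSpace ℝ (Fin n) →L[ℝ] ℝ).hasFDerivAt
    exact h3.smul_const (EuclideanSpace.proj i : EuclideanSpace ℝ (Fin n) →L[ℝ] ℝ)
  ext i j
  simp only [Hess, Matrix.of_apply, iteratedFDeriv_two_apply, h1, h2.fderiv]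
  simp [_root_.sum_apply, Matrix.diagonal_apply, Pi.single_apply]

lemma sum_eigs {n : ℕ} (d : Fin n → ℝ) (F : ℝ → ℝ) :
    ∑ i, F (eigs (Matrix.diagonal d) i) = ∑ i, F (d i) := by
  have hA : (Matrix.diagonal d).IsHermitian := by
    simp [Matrix.IsHermitian, Matrix.diagonal_conjTranspose]
  have h1 := hA.roots_charpoly_eq_eigenvalues
  have h2 : (Matrix.diagonal d).charpoly.roots = Multiset.map d Finset.univ.val := by
    rw [Matrix.charpoly_diagonal, Polynomial.roots_prod _ _ (by
      simp [Finset.prod_ne_zero_iff, Polynomial.X_sub_C_ne_zero])]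
    simp
  rw [h2] at h1
  have h3 := congrArg (fun m => (Multiset.map F m).sum) h1
  simp only [Multiset.map_map] at h3
  simp only [eigs, dif_pos hA]
  exact h3.symm

lemma log_sfun {a b : ℝ} (hb : 0 < b) (z : ℝ) :
    Real.log ((b + a + sfun a b z) / (b - a - sfun a b z)) = z := by
  have h1 := Real.sigmoid_pos z
  have h2 := Real.sigmoid_lt_one z
  have h3 := Real.sigmoid_mul_rexp_neg z
  rw [Real.sigmoid_neg] at h3
  have e1 : b + a + sfun a b z = 2 * b * Real.sigmoid z := by unfold sfun; ring
  have e2 : b - a - sfun a b z = 2 * b * (Real.sigmoid z * Real.exp (-z)) := by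
    rw [h3]; unfold sfun; ring
  have e3 : (b + a + sfun a b z) / (b - a - sfun a b z) = Real.exp z := by
    rw [e1, e2, Real.exp_neg]
    field_simp
  rw [e3, Real.log_exp]

lemma not_quad_one {a b c : ℝ} (hb : 0 < b) (hc : 0 < c) {f g : ℝ → ℝ} (hg0 : g 0 = 1)
    (hf : ∀ t, HasDerivAt f (g t) t)
    (hg : ∀ t, HasDerivAt g (sfun a b (c * (t * g t / 2 - f t))) t)
    (A β γ : ℝ) (h : ∀ t, f t = A * t ^ 2 / 2 + β * t + γ) : False := by
  have h1 : ∀ t, g t = A * t + β := by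
    intro t
    have e : HasDerivAt f (A * t + β) t := by
      rw [funext h]
      have := ((((hasDerivAt_id t).pow 2).const_mul A).div_const 2).add
        ((hasDerivAt_id t).const_mul β) |>.add_const γ
      refine (this.congr_deriv ?_)
      simp
      ring
    exact (hf t).unique e
  have h2 : ∀ t, sfun a b (c * (t * g t / 2 - f t)) = A := by
    intro t
    have e : HasDerivAt g A t := by
      rw [funext h1]
      simpa using ((hasDerivAt_id t).const_mul A).add_const β
    exact (hg t).unique e
  have h3 := (h2 0).trans (h2 1).symm
  unfold sfun at h3
  have h4 : Real.sigmoid (c * (0 * g 0 / 2 - f 0)) = Real.sigmoid (c * (1 * g 1 / 2 - f 1)) := by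
    have : 2 * b ≠ 0 := by positivity
    exact mul_left_cancel₀ this (by linarith)
  have h5 := mul_left_cancel₀ hc.ne' (Real.sigmoid_injective h4)
  rw [h, h, h1 1] at h5
  rw [h1] at hg0
  linarith

theorem nonquadratic_solution_exists (n : ℕ) (hn : 1 ≤ n) (a b : ℝ)
    (ha : a < -1) (hb : b = Real.sqrt (a ^ 2 - 1)) :
    ∃ u : EuclideanSpace ℝ (Fin n) → ℝ, ContDiff ℝ (⊤ : ℕ∞) u ∧
      (∀ x, (Hess n u x + (b + a) • (1 : Matrix (Fin n) (Fin n) ℝ)).PosDef ∧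
        ((b - a) • (1 : Matrix (Fin n) (Fin n) ℝ) - Hess n u x).PosDef) ∧
      (∀ x, (Real.sqrt (a ^ 2 + 1) / (2 * b)) *
          ∑ i, Real.log ((b + a + eigs (Hess n u x) i) / (b - a - eigs (Hess n u x) i))
        = -u x + (1/2) * ⟪x, gradient u x⟫) ∧
      ¬ IsQuadPoly n u := by
  have hsq : 0 < a ^ 2 - 1 := by nlinarith
  have hb0 : 0 < b := by rw [hb]; exact Real.sqrt_pos.2 hsq
  have hbb : b ^ 2 = a ^ 2 - 1 := by rw [hb]; exact Real.sq_sqrt hsq.le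
  have hba : b + a < 0 := by nlinarith
  set κ : ℝ := Real.sqrt (a ^ 2 + 1) / (2 * b) with hκ
  have hκ0 : 0 < κ := by
    have : 0 < Real.sqrt (a ^ 2 + 1) := Real.sqrt_pos.2 (by positivity)
    positivity
  have hc : 0 < κ⁻¹ := inv_pos.2 hκ0
  obtain ⟨f, g, hf0, hg0, hsm, hf, hg⟩ := oneD hb0 hba hc
  refine ⟨fun x => ∑ i, f (x i), ?_, ?_, ?_, ?_⟩
  · refine ContDiff.sum fun i _ => hsm.comp ?_
    exact (EuclideanSpace.proj i : EuclideanSpace ℝ (Fin n) →L[ℝ] ℝ).contDiff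
  · intro x
    rw [u_hess hf hg, ← Matrix.diagonal_one, ← Matrix.diagonal_smul, ← Matrix.diagonal_smul,
      Matrix.diagonal_add, Matrix.diagonal_sub, Matrix.posDef_diagonal_iff,
      Matrix.posDef_diagonal_iff]
    refine ⟨fun i => ?_, fun i => ?_⟩
    · have := (sfun_bounds (a := a) hb0 (κ⁻¹ * (x i * g (x i) / 2 - f (x i)))).1
      simp only [Pi.smul_apply, Pi.one_apply, smul_eq_mul]
      linarith
    · have := (sfun_bounds (a := a) hb0 (κ⁻¹ * (x i * g (x i) / 2 - f (x i)))).2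
      simp only [Pi.smul_apply, Pi.one_apply, smul_eq_mul]
      linarith
  · intro x
    rw [u_hess hf hg, sum_eigs _ (fun l => Real.log ((b + a + l) / (b - a - l)))]
    simp only [log_sfun hb0]
    rw [real_inner_comm, inner_gradient_left, (u_hasFDerivAt hf x).fderiv, ← Finset.mul_sum,
      ← mul_assoc, mul_inv_cancel₀ hκ0.ne', one_mul, Finset.sum_sub_distrib]
    simp only [_root_.sum_apply, _root_.smul_apply,
      smul_eq_mul]
    rw [Finset.mul_sum, neg_add_eq_sub]
    congr 1
    refine Finset.sum_congr rfl fun i _ => ?_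
    have : (EuclideanSpace.proj i : EuclideanSpace ℝ (Fin n) →L[ℝ] ℝ) x = x i := rfl
    rw [this]
    ring
  · rintro ⟨A, β, c, -, h⟩
    let i0 : Fin n := ⟨0, hn⟩
    refine not_quad_one (a := a) hb0 hc hg0 hf hg (A i0 i0) (β i0) c fun t => ?_
    have h1 := h (EuclideanSpace.single i0 t)
    have h2 : ∑ i, f ((EuclideanSpace.single i0 t : EuclideanSpace ℝ (Fin n)) i) = f t := by
      rw [Finset.sum_eq_single i0]
      · simp
      · intro j _ hj
        simp [hj, hf0]
      · simp
    replace h1 := h2.symm.trans h1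
    rw [h1, EuclideanSpace.inner_single_right]
    simp [Pi.single_apply]
    ring
end
end

section
/- Let n ≥ 1, p > 1 and K > 0 be constants. Let h : ℝⁿ → ℝ be a C¹ function with h ≥ 0 on ℝⁿ, such that the vector field X(x) := |Dh(x)|^{p−2} Dh(x) is C¹ on ℝⁿ and satisfies div X(x) = K ⟨x, Dh(x)⟩ |Dh(x)|^{p−2} for all x ∈ ℝⁿ. Then h is constant. -/
open Real Filter Matrix
open scoped RealInnerProductSpace

noncomputable section

/-- The divergence of a vector field on `ℝⁿ`. -/
def diverg (n : ℕ) (X : EuclideanSpace ℝ (Fin n) → EuclideanSpace ℝ (Fin n))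
    (x : EuclideanSpace ℝ (Fin n)) : ℝ :=
  ∑ i, fderiv ℝ X x (EuclideanSpace.single i 1) i

open MeasureTheory

lemma div_thm (n : ℕ) (g : EuclideanSpace ℝ (Fin n) → ℝ) (hg : ContDiff ℝ 1 g)
    (hgs : HasCompactSupport g)
    (X : EuclideanSpace ℝ (Fin n) → EuclideanSpace ℝ (Fin n)) (hX : ContDiff ℝ 1 X) :
    ∫ x, (fderiv ℝ g x (X x) + g x * diverg n X x) = 0 := by
  have hXi : ∀ i, ContDiff ℝ 1 (fun x => X x i) := fun i => by
    exact (contDiff_euclidean.1 hX) i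
  have hfd : ∀ i x v, fderiv ℝ X x v i = fderiv ℝ (fun y => X y i) x v := by
    intro i x v
    have h1 := ((hX.differentiable one_ne_zero x).hasFDerivAt)
    have h2 := ((EuclideanSpace.proj i : EuclideanSpace ℝ (Fin n) →L[ℝ] ℝ).hasFDerivAt
      (x := X x)).comp x h1
    have h3 : fderiv ℝ (fun y => X y i) x = _ := h2.fderiv
    rw [h3]; rfl
  have key : ∀ x, fderiv ℝ g x (X x) + g x * diverg n X x =
      ∑ i, (fderiv ℝ g x (EuclideanSpace.single i 1) * X x i
        + g x * fderiv ℝ (fun y => X y i) x (EuclideanSpace.single i 1)) := by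
    intro x
    rw [Finset.sum_add_distrib, diverg, Finset.mul_sum]
    congr 1
    · have : X x = ∑ i, X x i • EuclideanSpace.single i (1:ℝ) := by
        ext j
        simp [Finset.sum_apply, Pi.single_apply]
      conv_lhs => rw [this]
      rw [map_sum]
      exact Finset.sum_congr rfl fun i _ => by rw [map_smul, smul_eq_mul, mul_comm]
    · exact Finset.sum_congr rfl fun i _ => by rw [hfd]
  have i1 : ∀ i, Integrable (fun x => fderiv ℝ g x (EuclideanSpace.single i 1) * X x i) := by
    intro i
    apply Continuous.integrable_of_hasCompactSupport
    · exact ((hg.continuous_fderiv one_ne_zero).clm_apply continuous_const).mul (hXi i).continuous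
    · exact (hgs.fderiv_apply ℝ _).mul_right
  have i2 : ∀ i, Integrable (fun x => g x *
      fderiv ℝ (fun y => X y i) x (EuclideanSpace.single i 1)) := by
    intro i
    apply Continuous.integrable_of_hasCompactSupport
    · exact hg.continuous.mul
        (((hXi i).continuous_fderiv one_ne_zero).clm_apply continuous_const)
    · exact hgs.mul_right
  simp_rw [key]
  rw [integral_finsetSum _ (fun i _ => by exact (i1 i).add (i2 i))]
  refine Finset.sum_eq_zero fun i _ => ?_
  rw [integral_add (i1 i) (i2 i), integral_mul_fderiv_eq_neg_fderiv_mul_of_integrable (i1 i) (i2 i)]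
  · simp
  · apply Continuous.integrable_of_hasCompactSupport (hg.continuous.mul (hXi i).continuous)
      hgs.mul_right
  · exact fun x _ => hg.differentiable one_ne_zero x
  · exact fun x _ => (hXi i).differentiable one_ne_zero x

lemma young_aux (p : ℝ) (hp : 1 < p) : ∃ C : ℝ, 0 ≤ C ∧ ∀ a b : ℝ, 0 ≤ a → 0 ≤ b →
    p * (a ^ (p - 1) * b) ≤ (p - 1) / 2 * a ^ p + C * b ^ p := by
  set e : ℝ := (p - 1) / 2 / p with he
  have he0 : 0 < e := by rw [he]; apply div_pos <;> linarith
  refine ⟨p * (1 / e) ^ (p - 1), by positivity, ?_⟩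
  intro a b ha hb
  have hpe : p * e = (p - 1) / 2 := by rw [he]; field_simp
  have pw : ∀ t : ℝ, 0 ≤ t → t ^ (p - 1) * t = t ^ p := by
    intro t ht
    conv_lhs => rw [← Real.rpow_one t, ← Real.rpow_mul ht, one_mul]
    rw [← Real.rpow_add_of_nonneg ht (by linarith) (by norm_num)]; simp
  rcases le_total b (e * a) with h | h
  · have : p * (a ^ (p - 1) * b) ≤ p * (a ^ (p - 1) * (e * a)) := by gcongr
    have h2 : p * (a ^ (p - 1) * (e * a)) = (p - 1) / 2 * a ^ p := by
      rw [← pw a ha, ← hpe]; ring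
    have : 0 ≤ p * (1 / e) ^ (p - 1) * b ^ p := by positivity
    linarith
  · have h1 : a ≤ 1 / e * b := by
      rw [one_div, inv_mul_eq_div, le_div_iff₀ he0]; linarith
    have h2 : a ^ (p - 1) ≤ (1 / e) ^ (p - 1) * b ^ (p - 1) := by
      rw [← Real.mul_rpow (by positivity) hb]
      exact Real.rpow_le_rpow ha h1 (by linarith)
    have h3 : p * (a ^ (p - 1) * b) ≤ p * (((1 / e) ^ (p - 1) * b ^ (p - 1)) * b) := by gcongr
    have h4 : p * (((1 / e) ^ (p - 1) * b ^ (p - 1)) * b) = p * (1 / e) ^ (p - 1) * b ^ p := by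
      rw [← pw b hb]; ring
    have : 0 ≤ (p - 1) / 2 * a ^ p := by
      have : 0 ≤ (p-1)/2 := by linarith
      positivity
    linarith

lemma cacc (n : ℕ) (p K : ℝ) (hp : 1 < p)
    (h : EuclideanSpace ℝ (Fin n) → ℝ)
    (hh : ContDiff ℝ 1 h) (hpos : ∀ x, 0 ≤ h x)
    (X : EuclideanSpace ℝ (Fin n) → EuclideanSpace ℝ (Fin n))
    (hX : ∀ x, X x = ‖gradient h x‖ ^ (p - 2) • gradient h x)
    (hXC1 : ContDiff ℝ 1 X)
    (hdiv : ∀ x, diverg n X x = K * ⟪x, gradient h x⟫ * ‖gradient h x‖ ^ (p - 2))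
    (C : ℝ) (hC : ∀ a b : ℝ, 0 ≤ a → 0 ≤ b →
      p * (a ^ (p - 1) * b) ≤ (p - 1) / 2 * a ^ p + C * b ^ p)
    (f : EuclideanSpace ℝ (Fin n) → ℝ) (hf : ContDiff ℝ 1 f) (hfs : HasCompactSupport f)
    (hf0 : ∀ x, 0 ≤ f x) :
    (p - 1) / 2 * ∫ x, rexp (-(K / 2) * ‖x‖ ^ 2) * (f x * (‖gradient h x‖ / (h x + 1))) ^ p ≤
      C * ∫ x, rexp (-(K / 2) * ‖x‖ ^ 2) * ‖fderiv ℝ f x‖ ^ p := by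
  set w : EuclideanSpace ℝ (Fin n) → ℝ := fun x => rexp (-(K / 2) * ‖x‖ ^ 2) with hw
  have hu : ∀ x, 0 < h x + 1 := fun x => by linarith [hpos x]
  have hwd : ∀ x, HasFDerivAt w (w x • (-(K / 2)) • (2 • innerSL ℝ x)) x := by
    intro x
    exact (((hasStrictFDerivAt_norm_sq x).hasFDerivAt).const_mul (-(K / 2))).exp
  have hwC : ContDiff ℝ 1 w := by
    exact (contDiff_const.mul (contDiff_norm_sq ℝ)).exp
  have hud : ∀ x, HasFDerivAt (fun y => (h y + 1) ^ (1 - p))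
      (((1 - p) * (h x + 1) ^ (1 - p - 1)) • fderiv ℝ h x) x := by
    intro x
    exact ((hh.differentiable one_ne_zero x).hasFDerivAt.add_const 1).rpow_const
      (Or.inl (hu x).ne')
  have huC : ContDiff ℝ 1 (fun y => (h y + 1) ^ (1 - p)) :=
    (hh.add contDiff_const).rpow_const_of_ne (fun x => (hu x).ne')
  have hfd : ∀ x, HasFDerivAt (fun y => (f y) ^ p) ((p * f x ^ (p - 1)) • fderiv ℝ f x) x := by
    intro x
    exact (hf.differentiable one_ne_zero x).hasFDerivAt.rpow_const (Or.inr hp.le)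
  have hfC : ContDiff ℝ 1 (fun y => (f y) ^ p) := by
    have := ContDiff.rpow_const_of_le (m := 1) (p := p) (f := f) (by simpa using hf)
      (by simpa using hp.le)
    simpa using this
  have hfps : HasCompactSupport (fun y => (f y) ^ p) :=
    hfs.comp_left (g := fun t : ℝ => t ^ p) (Real.zero_rpow (by linarith))
  set g := fun y => (f y) ^ p * (w y * (h y + 1) ^ (1 - p)) with hgdef
  have hgC : ContDiff ℝ 1 g := hfC.mul (hwC.mul huC)
  have hgs : HasCompactSupport g := hfps.mul_right
  have hgrad : Continuous (gradient h) :=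
    (InnerProductSpace.toDual ℝ _).symm.continuous.comp (hh.continuous_fderiv one_ne_zero)
  have hgh : ∀ x v, fderiv ℝ h x v = ⟪gradient h x, v⟫ := by
    intro x v
    simp [gradient]
  have h0 := div_thm n g hgC hgs X hXC1
  set v : EuclideanSpace ℝ (Fin n) → ℝ := fun x => ‖gradient h x‖ / (h x + 1) with hv
  have hv0 : ∀ x, 0 ≤ v x := fun x => div_nonneg (norm_nonneg _) (hu x).le
  have hvc : Continuous v := hgrad.norm.div (hh.continuous.add continuous_const)
    fun x => (hu x).ne'
  have hw0 : ∀ x, 0 < w x := fun x => Real.exp_pos _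
  have hwc := hwC.continuous
  -- pointwise formula
  have hpt : ∀ x, fderiv ℝ g x (X x) + g x * diverg n X x ≤
      C * (w x * ‖fderiv ℝ f x‖ ^ p) - (p - 1) / 2 * (w x * (f x * v x) ^ p) := by
    intro x
    have hgd := (hfd x).mul ((hwd x).mul (hud x))
    set s := ‖gradient h x‖ with hs
    have hs0 : 0 ≤ s := norm_nonneg _
    have hgX : ⟪gradient h x, X x⟫ = s ^ p := by
      rw [hX, inner_smul_right, real_inner_self_eq_norm_sq, ← hs]
      rcases hs0.eq_or_lt with h1 | h1
      · rw [← h1, Real.zero_rpow (by linarith : p ≠ 0)]; simp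
      · rw [← Real.rpow_natCast, ← Real.rpow_add h1]; norm_num
    have hxX : ⟪x, X x⟫ = ⟪x, gradient h x⟫ * s ^ (p - 2) := by
      rw [hX, inner_smul_right, mul_comm]
    have hnX : ‖X x‖ = s ^ (p - 1) := by
      rw [hX, norm_smul, Real.norm_of_nonneg (by positivity), ← hs]
      rcases hs0.eq_or_lt with h1 | h1
      · rw [← h1, Real.zero_rpow (by linarith : p - 1 ≠ 0)]; simp
      · nth_rewrite 2 [← Real.rpow_one s]
        rw [← Real.rpow_add h1]; ring_nf
    have e1 : fderiv ℝ g x (X x) + g x * diverg n X x =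
        w x * (h x + 1) ^ (1 - p) * (p * f x ^ (p - 1) * fderiv ℝ f x (X x))
          - (p - 1) * (w x * ((f x) ^ p * (s ^ p * (h x + 1) ^ (-p)))) := by
      have : fderiv ℝ g x = _ := hgd.fderiv
      rw [this, hdiv]
      simp only [_root_.add_apply, _root_.smul_apply, smul_eq_mul,
        innerSL_apply_apply, Pi.mul_apply, hgh, hgX, hxX, nsmul_eq_mul, ← hs, hgdef]
      rw [show 1 - p - 1 = -p by ring]
      push_cast
      ring
    have e2 : s ^ p * (h x + 1) ^ (-p) = v x ^ p := by
      rw [hv, Real.div_rpow hs0 (hu x).le, Real.rpow_neg (hu x).le, div_eq_mul_inv]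
    have e3 : s ^ (p - 1) * (h x + 1) ^ (1 - p) = v x ^ (p - 1) := by
      rw [hv, Real.div_rpow hs0 (hu x).le, show 1 - p = -(p - 1) by ring,
        Real.rpow_neg (hu x).le, div_eq_mul_inv]
    have e4 : fderiv ℝ f x (X x) ≤ ‖fderiv ℝ f x‖ * s ^ (p - 1) := by
      rw [← hnX]
      exact (le_abs_self _).trans ((fderiv ℝ f x).le_opNorm _)
    have e5 : w x * (h x + 1) ^ (1 - p) * (p * f x ^ (p - 1) * fderiv ℝ f x (X x)) ≤
        w x * (p * ((f x * v x) ^ (p - 1) * ‖fderiv ℝ f x‖)) := by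
      have a1 := hw0 x
      have a2 := hu x
      have a3 := hf0 x
      calc _ ≤ w x * (h x + 1) ^ (1 - p) * (p * f x ^ (p - 1) *
              (‖fderiv ℝ f x‖ * s ^ (p - 1))) := by gcongr
        _ = _ := by
          rw [Real.mul_rpow a3 (hv0 x), ← e3]; ring
    have e6 := mul_le_mul_of_nonneg_left
      (hC (f x * v x) ‖fderiv ℝ f x‖ (mul_nonneg (hf0 x) (hv0 x)) (norm_nonneg _)) (hw0 x).le
    rw [e1, e2, ← Real.mul_rpow (hf0 x) (hv0 x)]
    nlinarith [e5, e6]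
  have I1 : Integrable (fun x => fderiv ℝ g x (X x) + g x * diverg n X x) := by
    have hdc : Continuous (diverg n X) := by
      unfold diverg
      refine continuous_finsetSum _ fun i _ => ?_
      exact (EuclideanSpace.proj i : EuclideanSpace ℝ (Fin n) →L[ℝ] ℝ).continuous.comp
        ((hXC1.continuous_fderiv one_ne_zero).clm_apply continuous_const)
    apply Integrable.add
    · apply Continuous.integrable_of_hasCompactSupport
      · exact (hgC.continuous_fderiv one_ne_zero).clm_apply hXC1.continuous
      · refine (hgs.fderiv ℝ).mono fun x hx => ?_
        contrapose! hx
        have : fderiv ℝ g x = 0 := by simpa using hx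
        simp [this]
    · exact (hgC.continuous.mul hdc).integrable_of_hasCompactSupport hgs.mul_right
  have I2 : Integrable (fun x => w x * ‖fderiv ℝ f x‖ ^ p) := by
    apply Continuous.integrable_of_hasCompactSupport
    · exact hwc.mul ((hf.continuous_fderiv one_ne_zero).norm.rpow_const
        fun x => Or.inr (by linarith))
    · exact ((hfs.fderiv ℝ).comp_left (g := fun t => ‖t‖ ^ p)
        (by simp [Real.zero_rpow (by linarith : p ≠ 0)])).mul_left
  have I3 : Integrable (fun x => w x * (f x * v x) ^ p) := by
    apply Continuous.integrable_of_hasCompactSupport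
    · exact hwc.mul ((hf.continuous.mul hvc).rpow_const fun x => Or.inr (by linarith))
    · exact (hfs.mul_right.comp_left (g := fun t : ℝ => t ^ p)
        (Real.zero_rpow (by linarith : p ≠ 0))).mul_left
  have hm := integral_mono I1 ((I2.const_mul C).sub (I3.const_mul ((p - 1) / 2))) hpt
  rw [h0] at hm
  simp only [Pi.sub_apply] at hm
  rw [integral_sub (I2.const_mul C) (I3.const_mul ((p - 1) / 2)), integral_const_mul,
    integral_const_mul] at hm
  linarith

lemma gauss_int (n : ℕ) (K : ℝ) (hK : 0 < K) :
    Integrable (fun x : EuclideanSpace ℝ (Fin n) => rexp (-(K / 2) * ‖x‖ ^ 2)) := by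
  have := (GaussianFourier.integrable_cexp_neg_mul_sq_norm_add (V := EuclideanSpace ℝ (Fin n))
    (b := ((K / 2 : ℝ) : ℂ)) (by simpa using hK) 0 0).norm
  refine this.congr (Eventually.of_forall fun x => ?_)
  simp only [Complex.norm_exp]
  congr 1
  simp [← Complex.ofReal_pow]

theorem liouville_p_laplace (n : ℕ) (hn : 1 ≤ n) (p K : ℝ) (hp : 1 < p) (hK : 0 < K)
    (h : EuclideanSpace ℝ (Fin n) → ℝ)
    (hh : ContDiff ℝ 1 h) (hpos : ∀ x, 0 ≤ h x)
    (X : EuclideanSpace ℝ (Fin n) → EuclideanSpace ℝ (Fin n))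
    (hX : ∀ x, X x = ‖gradient h x‖ ^ (p - 2) • gradient h x)
    (hXC1 : ContDiff ℝ 1 X)
    (hdiv : ∀ x, diverg n X x = K * ⟪x, gradient h x⟫ * ‖gradient h x‖ ^ (p - 2)) :
    ∃ c : ℝ, ∀ x, h x = c := by
  obtain ⟨C, hC0, hC⟩ := young_aux p hp
  have hp0 : p ≠ 0 := by linarith
  have hu : ∀ x, 0 < h x + 1 := fun x => by linarith [hpos x]
  let b : ContDiffBump (0 : EuclideanSpace ℝ (Fin n)) := ⟨1, 2, one_pos, one_lt_two⟩
  have hb : ContDiff ℝ 1 b := b.contDiff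
  obtain ⟨M, hM⟩ : ∃ M, ∀ x, ‖fderiv ℝ b x‖ ≤ M :=
    (b.hasCompactSupport.fderiv ℝ).exists_bound_of_continuous (hb.continuous_fderiv one_ne_zero)
  have hM0 : 0 ≤ M := (norm_nonneg _).trans (hM 0)
  let φ : ℝ → EuclideanSpace ℝ (Fin n) → ℝ := fun t x => b (t • x)
  have hφC : ∀ t, ContDiff ℝ 1 (φ t) := fun t => hb.comp (contDiff_const_smul t)
  have hφs : ∀ t, 0 < t → HasCompactSupport (φ t) := fun t ht =>
    b.hasCompactSupport.comp_smul ht.ne'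
  have hφ0 : ∀ t x, 0 ≤ φ t x := fun t x => b.nonneg
  have hφd : ∀ t, 0 < t → ∀ x, ‖fderiv ℝ (φ t) x‖ ≤ t * M := by
    intro t ht x
    have : fderiv ℝ (φ t) x = t • fderiv ℝ b (t • x) := fderiv_comp_smul ..
    rw [this, norm_smul, Real.norm_of_nonneg ht.le]
    gcongr
    exact hM _
  set w : EuclideanSpace ℝ (Fin n) → ℝ := fun x => rexp (-(K / 2) * ‖x‖ ^ 2) with hw
  have hwc : Continuous w := by rw [hw]; fun_prop
  have hwI : Integrable w := gauss_int n K hK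
  have hgrad : Continuous (gradient h) :=
    (InnerProductSpace.toDual ℝ _).symm.continuous.comp (hh.continuous_fderiv one_ne_zero)
  set v : EuclideanSpace ℝ (Fin n) → ℝ := fun x => ‖gradient h x‖ / (h x + 1) with hv
  have hv0 : ∀ x, 0 ≤ v x := fun x => div_nonneg (norm_nonneg _) (hu x).le
  have hvc : Continuous v := hgrad.norm.div (hh.continuous.add continuous_const)
    fun x => (hu x).ne'
  have Ic : ∀ t, Continuous (fun x => w x * (φ t x * v x) ^ p) := fun t =>
    hwc.mul (((hφC t).continuous.mul hvc).rpow_const fun x => Or.inr (by linarith))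
  have Is : ∀ t, 0 < t → HasCompactSupport (fun x => w x * (φ t x * v x) ^ p) := fun t ht =>
    ((hφs t ht).mul_right.comp_left (g := fun t : ℝ => t ^ p) (Real.zero_rpow hp0)).mul_left
  have II : ∀ t, 0 < t → Integrable (fun x => w x * (φ t x * v x) ^ p) := fun t ht =>
    (Ic t).integrable_of_hasCompactSupport (Is t ht)
  have bound : ∀ t, 0 < t → (p - 1) / 2 * ∫ x, w x * (φ t x * v x) ^ p ≤
      C * ((t * M) ^ p * ∫ x, w x) := by
    intro t ht
    refine (cacc n p K hp h hh hpos X hX hXC1 hdiv C hC (φ t) (hφC t) (hφs t ht) (hφ0 t)).trans ?_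
    gcongr
    rw [← integral_const_mul]
    refine integral_mono_of_nonneg (Eventually.of_forall fun x => ?_) (hwI.const_mul _)
      (Eventually.of_forall fun x => ?_)
    · simp only [Pi.zero_apply]; positivity
    · have := hφd t ht x
      simp only
      rw [mul_comm]
      gcongr
  have hgz : ∀ x, gradient h x = 0 := by
    intro x
    set t0 : ℝ := 1 / (‖x‖ + 1) with ht0
    have ht0p : 0 < t0 := by positivity
    have hφ1 : φ t0 x = 1 := by
      apply b.one_of_mem_closedBall
      simp only [mem_closedBall_zero_iff, norm_smul, b]
      rw [Real.norm_of_nonneg ht0p.le, ht0, one_div, inv_mul_le_iff₀ (by positivity)]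
      linarith
    have mono : ∀ t, 0 < t → t ≤ t0 / 2 → ∀ y, φ t0 y ≤ φ t y := by
      intro t ht htt y
      by_cases hy : ‖t • y‖ ≤ 1
      · have : φ t y = 1 := b.one_of_mem_closedBall (by simpa [b] using hy)
        rw [this]; exact b.le_one
      · have : φ t0 y = 0 := by
          apply b.zero_of_le_dist
          simp only [dist_zero_right, b]
          push Not at hy
          rw [norm_smul, Real.norm_of_nonneg ht.le] at hy
          rw [norm_smul, Real.norm_of_nonneg ht0p.le]
          nlinarith [norm_nonneg y]
        rw [this]; exact hφ0 t y
    have hle : ∀ t, 0 < t → t ≤ t0 / 2 → (p - 1) / 2 * ∫ x, w x * (φ t0 x * v x) ^ p ≤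
        C * ((t * M) ^ p * ∫ x, w x) := by
      intro t ht htt
      refine le_trans ?_ (bound t ht)
      refine mul_le_mul_of_nonneg_left ?_ (by linarith)
      refine integral_mono (II t0 ht0p) (II t ht) fun y => ?_
      have h1 := mono t ht htt y
      have h2 := hφ0 t0 y
      have h3 := hv0 y
      simp only
      gcongr
    have hlim : Tendsto (fun t : ℝ => C * ((t * M) ^ p * ∫ x, w x)) (nhdsWithin 0 (Set.Ioi 0))
        (nhds 0) := by
      have hc : Continuous (fun t : ℝ => C * ((t * M) ^ p * ∫ x, w x)) :=
        continuous_const.mul (((continuous_id.mul continuous_const).rpow_const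
          fun x => Or.inr (by linarith)).mul continuous_const)
      have := hc.tendsto 0
      simp only [zero_mul, Real.zero_rpow hp0, mul_zero] at this
      exact this.mono_left nhdsWithin_le_nhds
    have hz := ge_of_tendsto hlim (by
      filter_upwards [Ioc_mem_nhdsGT (half_pos ht0p)] with t ht using hle t ht.1 ht.2)
    by_contra hne
    have hpos' := (Ic t0).integral_pos_of_hasCompactSupport_nonneg_nonzero (μ := volume)
      (Is t0 ht0p) (x := x) (fun y => by
        have h2 := hφ0 t0 y
        have h3 := hv0 y
        simp only [Pi.zero_apply]; positivity) (by
        have : 0 < v x := div_pos (norm_pos_iff.2 hne) (hu x)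
        rw [hφ1]
        positivity)
    have : 0 < (p - 1) / 2 := by linarith
    nlinarith [mul_pos this hpos']
  have hfz : ∀ x, fderiv ℝ h x = 0 := by
    intro x
    have := hgz x
    simpa [gradient] using this
  exact ⟨h 0, fun x => is_const_of_fderiv_eq_zero (hh.differentiable one_ne_zero) hfz x 0⟩
end
end

section
/- Let n ≥ 1 and let w : ℝⁿ → ℝ be a C² strictly convex function (D²w(x) is positive definite for all x) satisfying −√2 · Σ_{i=1}^n 1/λ_i(D²w(x)) = −w(x) + (1/2)⟨x, Dw(x)⟩ for all x ∈ ℝⁿ. Then the gradient map Dw : ℝⁿ → ℝⁿ is surjective, i.e. Dw(ℝⁿ) = ℝⁿ. -/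
open Real Filter Matrix
open scoped RealInnerProductSpace

noncomputable section

/-- On an interval where the trace `T` is bounded along the path, the image contains the closure. -/
lemma aux_endpoint {E : Type*} [NormedAddCommGroup E] [InnerProductSpace ℝ E]
    [FiniteDimensional ℝ E] (F : E → E) (hFc : Continuous F) (p : E) (X : ℝ → E) (X' : ℝ → E)
    (J : Set ℝ) (hJ : Convex ℝ J) (M : ℝ)
    (hFX : ∀ t ∈ J, F (X t) = t • p)
    (hX : ∀ t ∈ J, HasDerivAt X (X' t) t) (hM : ∀ t ∈ J, ‖X' t‖ ≤ M)
    (t₀ : ℝ) (ht₀ : t₀ ∈ J) (hJb : J ⊆ Set.Icc 0 1)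
    (e : ℝ) (he : e ∈ closure J) : ∃ x, F x = e • p := by
  have hM0 : 0 ≤ M := (norm_nonneg _).trans (hM t₀ ht₀)
  have hball : ∀ t ∈ J, X t ∈ Metric.closedBall (X t₀) M := by
    intro t ht
    have h1 := hJ.norm_image_sub_le_of_norm_hasDerivWithin_le
      (fun s hs => (hX s hs).hasDerivWithinAt) hM ht₀ ht
    have h2 : ‖t - t₀‖ ≤ 1 := by
      rw [Real.norm_eq_abs, abs_le]
      have a1 := hJb ht
      have a2 := hJb ht₀
      constructor <;> linarith [a1.1, a1.2, a2.1, a2.2]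
    rw [Metric.mem_closedBall, dist_eq_norm]
    nlinarith
  have hK : IsClosed (F '' Metric.closedBall (X t₀) M) :=
    ((isCompact_closedBall (X t₀) M).image hFc).isClosed
  have hcl : IsClosed ((fun t : ℝ => t • p) ⁻¹' (F '' Metric.closedBall (X t₀) M)) :=
    hK.preimage (by fun_prop)
  have hsub : J ⊆ (fun t : ℝ => t • p) ⁻¹' (F '' Metric.closedBall (X t₀) M) :=
    fun t ht => ⟨X t, hball t ht, hFX t ht⟩
  obtain ⟨x, -, hx⟩ := closure_minimal hsub hcl he
  exact ⟨x, hx⟩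

lemma aux_core {E : Type*} [NormedAddCommGroup E] [InnerProductSpace ℝ E]
    [FiniteDimensional ℝ E] (w : E → ℝ) (F : E → E) (L : E → E ≃L[ℝ] E) (T : E → ℝ) (c : ℝ)
    (hc : 0 < c)
    (hF : ∀ x, HasStrictFDerivAt F (L x : E →L[ℝ] E) x)
    (hw : ∀ x, HasGradientAt w (F x) x)
    (hT : ∀ x, c * T x = w x - (1/2) * ⟪x, F x⟫)
    (hb : ∀ x p, ‖(L x).symm p‖ ≤ T x * ‖p‖)
    (hpos : ∀ x v, v ≠ 0 → 0 < ⟪L x v, v⟫) : Function.Surjective F := by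
  have hFc : Continuous F := continuous_iff_continuousAt.2 fun x => (hF x).continuousAt
  have hinj : Function.Injective F := by
    intro y x hxy
    by_contra hne
    have hne' : x - y ≠ 0 := sub_ne_zero.2 (Ne.symm hne)
    have hd : ∀ s : ℝ, HasDerivAt (fun s : ℝ => ⟪F (y + s • (x - y)), x - y⟫)
        ⟪L (y + s • (x - y)) (x - y), x - y⟫ s := by
      intro s
      have h1 : HasDerivAt (fun s : ℝ => y + s • (x - y)) (x - y) s := by
        simpa using ((hasDerivAt_id s).smul_const (x - y)).const_add y
      have h2 := (hF (y + s • (x - y))).hasFDerivAt.comp_hasDerivAt s h1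
      simpa using h2.inner ℝ (hasDerivAt_const s (x - y))
    have hm := strictMono_of_hasDerivAt_pos hd (fun s => hpos _ _ hne')
    have := hm (show (0 : ℝ) < 1 by norm_num)
    simp [hxy] at this
  have hopen : IsOpenMap F := isOpenMap_of_hasStrictFDerivAt_equiv hF
  have hΩ : IsOpen (Set.range F) := hopen.isOpen_range
  set g : E → E := Function.invFun F with hg
  have hgF : ∀ x, g (F x) = x := Function.leftInverse_invFun hinj
  -- path data
  have hpath : ∀ (p : E) (t : ℝ), t • p ∈ Set.range F →
      F (g (t • p)) = t • p ∧ HasDerivAt (fun t : ℝ => g (t • p)) ((L (g (t • p))).symm p) t := by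
    rintro p t ⟨x, hx⟩
    rw [← hx, hgF]
    refine ⟨rfl, ?_⟩
    have h1 : HasDerivAt (fun t : ℝ => t • p) p t := by
      simpa using (hasDerivAt_id t).smul_const p
    have h2 := ((hF x).to_local_left_inverse (g := g) (Eventually.of_forall hgF)).hasFDerivAt
    rw [hx] at h2
    exact h2.comp_hasDerivAt t h1
  have hφd : ∀ (p : E) (t : ℝ), t • p ∈ Set.range F →
      HasDerivAt (fun t : ℝ => ⟪g (t • p), p⟫) ⟪(L (g (t • p))).symm p, p⟫ t := by
    intro p t ht
    simpa using (hpath p t ht).2.inner ℝ (hasDerivAt_const t p)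
  have hφ0 : ∀ (p x : E), 0 ≤ ⟪(L x).symm p, p⟫ := by
    intro p x
    by_cases h : p = 0
    · simp [h]
    · have := hpos x ((L x).symm p) (by simpa using h)
      rw [ContinuousLinearEquiv.apply_symm_apply, real_inner_comm] at this
      exact this.le
  have hφ1 : ∀ (p x : E), ⟪(L x).symm p, p⟫ ≤ ‖p‖ ^ 2 * T x := by
    intro p x
    have h1 := real_inner_le_norm ((L x).symm p) p
    have h2 := hb x p
    nlinarith [norm_nonneg p]
  -- the trace along the path
  have hTd : ∀ (p : E) (t : ℝ), t • p ∈ Set.range F →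
      HasDerivAt (fun t : ℝ => T (g (t • p)))
        ((t * ⟪(L (g (t • p))).symm p, p⟫ - ⟪g (t • p), p⟫) / (2 * c)) t := by
    intro p t ht
    have hS : IsOpen ((fun t : ℝ => t • p) ⁻¹' Set.range F) := hΩ.preimage (by fun_prop)
    have hev : (fun t : ℝ => T (g (t • p))) =ᶠ[nhds t]
        fun t : ℝ => (w (g (t • p)) - (1/2) * (t * ⟪g (t • p), p⟫)) / c := by
      filter_upwards [hS.mem_nhds ht] with s hs
      have h1 := hT (g (s • p))
      rw [(hpath p s hs).1, inner_smul_right] at h1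
      rw [← h1]; field_simp
    refine HasDerivAt.congr_of_eventuallyEq ?_ hev
    have h1 := (hw (g (t • p))).hasFDerivAt.comp_hasDerivAt t (hpath p t ht).2
    rw [(hpath p t ht).1] at h1
    have h2 := (hasDerivAt_id t).mul (hφd p t ht)
    have h3 := (h1.sub (h2.const_mul (1/2))).div_const c
    have h4 : (t * ⟪(L (g (t • p))).symm p, p⟫ - ⟪g (t • p), p⟫) / (2 * c) =
        (((InnerProductSpace.toDual ℝ E) (t • p)) ((L (g (t • p))).symm p) -
        1 / 2 * (1 * ⟪g (t • p), p⟫ + id t * ⟪(L (g (t • p))).symm p, p⟫)) / c := by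
      rw [InnerProductSpace.toDual_apply_apply, real_inner_smul_left,
        real_inner_comm ((L (g (t • p))).symm p) p, id]
      field_simp
      ring
    rw [h4]
    exact h3
  have hmono : ∀ (p : E) (J : Set ℝ), Convex ℝ J → (∀ t ∈ J, t • p ∈ Set.range F) →
      MonotoneOn (fun t : ℝ => ⟪g (t • p), p⟫) J := by
    intro p J hJ hJS
    refine monotoneOn_of_deriv_nonneg hJ
      (fun t ht => (hφd p t (hJS t ht)).continuousAt.continuousWithinAt)
      (fun t ht => (hφd p t (hJS t (interior_subset ht))).differentiableAt.differentiableWithinAt)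
      (fun t ht => ?_)
    rw [(hφd p t (hJS t (interior_subset ht))).deriv]
    exact hφ0 _ _
  -- closing an interval given a bound of T
  have hclose : ∀ (p : E) (J : Set ℝ) (t₀ e M : ℝ), Convex ℝ J → J ⊆ Set.Icc 0 1 → t₀ ∈ J →
      (∀ t ∈ J, t • p ∈ Set.range F) → (∀ t ∈ J, T (g (t • p)) ≤ M) → e ∈ closure J →
      e • p ∈ Set.range F := by
    intro p J t₀ e M hJ hJ1 ht₀ hJS hM he
    refine aux_endpoint F hFc p (fun t => g (t • p)) _ J hJ (M * ‖p‖)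
      (fun t ht => (hpath p t (hJS t ht)).1) (fun t ht => (hpath p t (hJS t ht)).2)
      (fun t ht => (hb _ _).trans ?_) t₀ ht₀ hJ1 e he
    exact mul_le_mul_of_nonneg_right (hM t ht) (norm_nonneg _)
  have hbad : ∀ p : E, IsCompact (Set.Icc (0:ℝ) 1 ∩ ((fun t : ℝ => t • p) ⁻¹' Set.range F)ᶜ) := by
    intro p
    have hS : IsOpen ((fun t : ℝ => t • p) ⁻¹' Set.range F) := hΩ.preimage (by fun_prop)
    exact isCompact_Icc.inter_right hS.isClosed_compl
  -- step one: the origin is in the image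
  have hzero : (0 : E) ∈ Set.range F := by
    set p := F 0 with hp
    by_contra h0
    obtain ⟨a, ⟨⟨ha0, ha1⟩, haS⟩, hmax⟩ := (hbad p).exists_isGreatest
      ⟨0, ⟨le_rfl, zero_le_one⟩, by simpa using h0⟩
    have h1S : (1 : ℝ) • p ∈ Set.range F := ⟨0, by simp [hp]⟩
    have hne : a ≠ 1 := by rintro rfl; exact haS h1S
    have ha1' : a < 1 := lt_of_le_of_ne ha1 hne
    have hJS : ∀ t ∈ Set.Ioc a 1, t • p ∈ Set.range F := by
      intro t ht
      by_contra hcon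
      exact absurd (hmax ⟨⟨ha0.trans ht.1.le, ht.2⟩, hcon⟩) (not_le.2 ht.1)
    have hmem1 : (1 : ℝ) ∈ Set.Ioc a 1 := ⟨ha1', le_rfl⟩
    set B := |⟪g ((1:ℝ) • p), p⟫| / (2 * c) with hB
    have hB0 : 0 ≤ B := by positivity
    refine haS (hclose p (Set.Ioc a 1) 1 a (T (g ((1:ℝ) • p)) + B) (convex_Ioc a 1)
      (fun t ht => ⟨ha0.trans ht.1.le, ht.2⟩) hmem1 hJS ?_ ?_)
    · intro t ht
      have := (convex_Ioc a 1).mul_sub_le_image_sub_of_le_deriv (C := -B)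
        (f := fun t : ℝ => T (g (t • p)))
        (fun t ht => (hTd p t (hJS t ht)).continuousAt.continuousWithinAt)
        (fun t ht => (hTd p t (hJS t (interior_subset ht))).differentiableAt.differentiableWithinAt)
        (fun s hs => ?_) t ht 1 hmem1 ht.2
      · nlinarith [ht.1]
      · have hs' := interior_subset hs
        rw [(hTd p s (hJS s hs')).deriv, hB, ← neg_div]
        refine div_le_div_of_nonneg_right ?_ (by positivity)
        have m := hmono p _ (convex_Ioc a 1) hJS hs' hmem1 hs'.2
        have m2 := mul_nonneg (ha0.trans hs'.1.le) (hφ0 p (g (s • p)))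
        have m3 := le_abs_self ⟪g ((1:ℝ) • p), p⟫
        simp only at m
        linarith
    · rw [closure_Ioc hne]; exact ⟨le_rfl, ha1⟩
  -- step two
  intro p
  by_contra hp
  obtain ⟨b, ⟨⟨hb0, hb1⟩, hbS⟩, hmin⟩ := (hbad p).exists_isLeast
    ⟨1, ⟨zero_le_one, le_rfl⟩, by simpa using hp⟩
  have h0S : (0 : ℝ) • p ∈ Set.range F := by simpa using hzero
  have hne : 0 ≠ b := by rintro rfl; exact hbS h0S
  have hb0' : 0 < b := lt_of_le_of_ne hb0 hne
  have hJS : ∀ t ∈ Set.Ico 0 b, t • p ∈ Set.range F := by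
    intro t ht
    by_contra hcon
    exact absurd (hmin ⟨⟨ht.1, ht.2.le.trans hb1⟩, hcon⟩) (not_le.2 ht.2)
  have hmem0 : (0 : ℝ) ∈ Set.Ico 0 b := ⟨le_rfl, hb0'⟩
  set B := |⟪g ((0:ℝ) • p), p⟫| / (2 * c) with hB
  have hB0 : 0 ≤ B := by positivity
  set A := ‖p‖ ^ 2 / (2 * c) with hA
  have hA0 : 0 ≤ A := by positivity
  have hhd : ∀ t ∈ Set.Ico 0 b, HasDerivAt (fun t : ℝ => Real.exp (-(A * t)) * T (g (t • p)))
      (Real.exp (-(A * t)) * (-A) * T (g (t • p)) + Real.exp (-(A * t)) *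
        ((t * ⟪(L (g (t • p))).symm p, p⟫ - ⟪g (t • p), p⟫) / (2 * c))) t := by
    intro t ht
    have h1 : HasDerivAt (fun t : ℝ => -(A * t)) (-A) t := by
      have h0 := (hasDerivAt_id t).const_mul (-A)
      simpa using h0
    exact h1.exp.mul (hTd p t (hJS t ht))
  have hJ1 : Set.Ico 0 b ⊆ Set.Icc 0 1 := fun t ht => ⟨ht.1, ht.2.le.trans hb1⟩
  refine hbS (hclose p (Set.Ico 0 b) 0 b (Real.exp A * (|T (g ((0:ℝ) • p))| + B)) (convex_Ico 0 b)
    hJ1 hmem0 hJS ?_ ?_)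
  · intro t ht
    have := (convex_Ico 0 b).image_sub_le_mul_sub_of_deriv_le (C := B)
      (f := fun t : ℝ => Real.exp (-(A * t)) * T (g (t • p)))
      (fun t ht => (hhd t ht).continuousAt.continuousWithinAt)
      (fun t ht => (hhd t (interior_subset ht)).differentiableAt.differentiableWithinAt)
      (fun s hs => ?_) 0 hmem0 t ht ht.1
    · simp only [mul_zero, neg_zero, Real.exp_zero, one_mul, sub_zero] at this
      have ht1 := (hJ1 ht).2
      have e1 : Real.exp (-(A * t)) * T (g (t • p)) ≤ |T (g ((0:ℝ) • p))| + B := by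
        nlinarith [le_abs_self (T (g ((0:ℝ) • p)))]
      have e2 : T (g (t • p)) = Real.exp (A * t) * (Real.exp (-(A * t)) * T (g (t • p))) := by
        rw [← mul_assoc, ← Real.exp_add]; simp
      rw [e2]
      refine (mul_le_mul_of_nonneg_left e1 (Real.exp_pos _).le).trans ?_
      refine mul_le_mul_of_nonneg_right (Real.exp_le_exp.2 ?_) (by positivity)
      nlinarith
    · have hs' := interior_subset hs
      rw [(hhd s hs').deriv]
      have m := hmono p _ (convex_Ico 0 b) hJS hmem0 hs' hs'.1
      simp only at m
      have m1 := hφ0 p (g (s • p))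
      have m2 := hφ1 p (g (s • p))
      have m3 := neg_abs_le ⟪g ((0:ℝ) • p), p⟫
      have hs1 := (hJ1 hs').2
      have m4 : (s * ⟪(L (g (s • p))).symm p, p⟫ - ⟪g (s • p), p⟫) / (2 * c)
          ≤ A * T (g (s • p)) + B := by
        rw [hA, hB, div_mul_eq_mul_div, ← add_div]
        refine div_le_div_of_nonneg_right ?_ (by positivity)
        nlinarith
      have e0 := Real.exp_pos (-(A * s))
      have e1 : Real.exp (-(A * s)) ≤ 1 := Real.exp_le_one_iff.2 (by nlinarith [hs'.1])
      have e2 := mul_le_mul_of_nonneg_left m4 e0.le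
      nlinarith
  · rw [closure_Ico hne]; exact ⟨hb0, le_rfl⟩

lemma aux_bilin {n : ℕ} (w : EuclideanSpace ℝ (Fin n) → ℝ) (x u v : EuclideanSpace ℝ (Fin n)) :
    fderiv ℝ (fderiv ℝ w) x u v = ∑ i, ∑ j, u i * v j * Hess n w x i j := by
  have hexp : ∀ z : EuclideanSpace ℝ (Fin n), z = ∑ i, z i • EuclideanSpace.single i (1:ℝ) := by
    intro z
    ext k
    simp [Finset.sum_apply, Pi.single_apply]
  conv_lhs => rw [hexp u, hexp v]
  simp only [map_sum, map_smul, _root_.sum_apply, _root_.smul_apply,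
    smul_eq_mul, Hess, Matrix.of_apply, iteratedFDeriv_two_apply]
  simp only [Finset.mul_sum]
  refine (Finset.sum_comm).trans ?_
  simp [mul_assoc, mul_left_comm]

/-- The norm bound through the eigenbasis. -/
lemma aux_eig {n : ℕ} (A : Matrix (Fin n) (Fin n) ℝ) (hA : A.PosDef)
    (v p : EuclideanSpace ℝ (Fin n)) (h : Matrix.toEuclideanLin A v = p) :
    ‖v‖ ≤ (∑ i, 1 / eigs A i) * ‖p‖ := by
  have hH : A.IsHermitian := hA.1
  have he : eigs A = hH.eigenvalues := by rw [eigs, dif_pos hH]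
  rw [he]
  have hpos : ∀ i, 0 < hH.eigenvalues i := hA.eigenvalues_pos
  set b := hH.eigenvectorBasis with hbdef
  have hcoef : ∀ i, hH.eigenvalues i * ⟪b i, v⟫ = ⟪b i, p⟫ := by
    intro i
    rw [← h]
    have hs := (Matrix.isSymmetric_toEuclideanLin_iff.2 hH) (b i) v
    rw [← hs]
    have h3 : Matrix.toEuclideanLin A (b i) = hH.eigenvalues i • b i := by
      have := hH.mulVec_eigenvectorBasis i
      ext k
      have := congrFun this k
      simpa [Matrix.toLpLin_apply] using this
    rw [h3, inner_smul_left]; simp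
  have hvs : ‖v‖ ^ 2 = ∑ i, ⟪b i, v⟫ ^ 2 := by
    rw [← b.sum_sq_norm_inner_right v]; simp
  have hps : ‖p‖ ^ 2 = ∑ i, ⟪b i, p⟫ ^ 2 := by
    rw [← b.sum_sq_norm_inner_right p]; simp
  set S := ∑ i, 1 / hH.eigenvalues i with hS
  have hS0 : 0 ≤ S := Finset.sum_nonneg fun i _ => by have := hpos i; positivity
  refine abs_le_of_sq_le_sq' ?_ (by positivity) |>.2
  rw [mul_pow, hvs, hps, Finset.mul_sum]
  refine Finset.sum_le_sum fun i _ => ?_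
  have h1 : 1 / hH.eigenvalues i ≤ S :=
    Finset.single_le_sum (f := fun i => 1 / hH.eigenvalues i)
      (fun i _ => by have := hpos i; positivity) (Finset.mem_univ i)
  have h2 : 1 ≤ S * hH.eigenvalues i := by
    rwa [div_le_iff₀ (hpos i)] at h1
  rw [← hcoef i]
  have h3 : 1 ≤ (S * hH.eigenvalues i) ^ 2 := one_le_pow₀ h2
  nlinarith [sq_nonneg ⟪b i, v⟫]

theorem gradient_map_surjective (n : ℕ) (hn : 1 ≤ n)
    (w : EuclideanSpace ℝ (Fin n) → ℝ)
    (hw : ContDiff ℝ 2 w)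
    (hconv : ∀ x, (Hess n w x).PosDef)
    (heq : ∀ x, -Real.sqrt 2 * ∑ i, 1 / eigs (Hess n w x) i
      = -w x + (1/2) * ⟪x, gradient w x⟫) :
    Function.Surjective (fun x => gradient w x) := by
  set F : EuclideanSpace ℝ (Fin n) → EuclideanSpace ℝ (Fin n) := fun x => gradient w x with hFdef
  obtain ⟨R, hR⟩ : ∃ R : (EuclideanSpace ℝ (Fin n) →L[ℝ] ℝ) →L[ℝ] EuclideanSpace ℝ (Fin n),
      ∀ f, R f = (InnerProductSpace.toDual ℝ (EuclideanSpace ℝ (Fin n))).symm f :=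
    ⟨LinearMap.toContinuousLinearMap
      { toFun := fun f => (InnerProductSpace.toDual ℝ (EuclideanSpace ℝ (Fin n))).symm f
        map_add' := fun f g => map_add _ f g
        map_smul' := fun c f => by simp }, fun f => rfl⟩
  set D : EuclideanSpace ℝ (Fin n) → EuclideanSpace ℝ (Fin n) →L[ℝ] EuclideanSpace ℝ (Fin n) :=
    fun x => R.comp (fderiv ℝ (fderiv ℝ w) x) with hD
  have hfd : ContDiff ℝ 1 (fderiv ℝ w) := hw.fderiv_right (by norm_num)
  have hDs : ∀ x, HasStrictFDerivAt F (D x) x := by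
    intro x
    have h1 : HasStrictFDerivAt (fderiv ℝ w) (fderiv ℝ (fderiv ℝ w) x) x :=
      hfd.contDiffAt.hasStrictFDerivAt (by norm_num)
    have h2 := R.hasStrictFDerivAt.comp x h1
    have h3 : F = R ∘ fderiv ℝ w := by
      funext y; exact (hR _).symm
    rw [h3]; exact h2
  have hDin : ∀ x u v, ⟪D x u, v⟫ = ∑ i, ∑ j, u i * v j * Hess n w x i j := by
    intro x u v
    rw [← aux_bilin]
    simp only [hD, ContinuousLinearMap.comp_apply, hR]
    exact InnerProductSpace.toDual_symm_apply
  have hpos : ∀ x v, v ≠ 0 → 0 < ⟪D x v, v⟫ := by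
    intro x v hv
    rw [hDin]
    have := (hconv x).dotProduct_mulVec_pos (x := v.ofLp) (by simpa using hv)
    simp only [dotProduct, Matrix.mulVec, Finset.mul_sum] at this
    refine lt_of_lt_of_eq this (Finset.sum_congr rfl fun i _ => Finset.sum_congr rfl fun j _ => ?_)
    simp only [Pi.star_apply, star_trivial]
    ring
  have hinj : ∀ x, Function.Injective (D x) := by
    intro x
    refine (injective_iff_map_eq_zero (D x)).2 fun v hv => ?_
    by_contra h
    have := hpos x v h
    simp [hv] at this
  set L : EuclideanSpace ℝ (Fin n) → EuclideanSpace ℝ (Fin n) ≃L[ℝ] EuclideanSpace ℝ (Fin n) :=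
    fun x => (LinearEquiv.ofInjectiveEndo (D x : _ →ₗ[ℝ] _) (hinj x)).toContinuousLinearEquiv
    with hL
  have hLD : ∀ x, (L x : EuclideanSpace ℝ (Fin n) →L[ℝ] EuclideanSpace ℝ (Fin n)) = D x := by
    intro x; ext v; rfl
  have hLDa : ∀ x v, L x v = D x v := fun x v => rfl
  refine aux_core w F L (fun x => ∑ i, 1 / eigs (Hess n w x) i) (Real.sqrt 2) (by positivity)
    (fun x => by rw [hLD]; exact hDs x)
    (fun x => ((hw.differentiable (by norm_num)) x).hasGradientAt)
    (fun x => by have := heq x; simp only [hFdef]; linarith)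
    (fun x p => ?_) (fun x v hv => by rw [hLDa]; exact hpos x v hv)
  refine aux_eig _ (hconv x) _ _ ?_
  have hp : D x ((L x).symm p) = p := by rw [← hLDa]; simp
  refine Eq.trans ?_ hp
  refine ext_inner_right ℝ fun v => ?_
  rw [hDin]
  have hsym : ∀ i j, Hess n w x i j = Hess n w x j i := fun i j => by
    simpa using ((hconv x).1.apply j i)
  simp only [PiLp.inner_apply, Matrix.toLpLin_apply, Matrix.mulVec, dotProduct]
  rw [Finset.sum_comm]
  refine Finset.sum_congr rfl fun i _ => ?_
  simp only [RCLike.inner_apply, conj_trivial, Finset.mul_sum]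
  refine Finset.sum_congr rfl fun j _ => ?_
  rw [hsym j i]; ring
end
end

section
/- Let n ≥ 1 and let w : ℝⁿ → ℝ be a smooth strictly convex function (D²w(x) positive definite for all x) satisfying the semilinear equation √2 · Δw(x) = (1/2)⟨x, Dw(x)⟩ − w(x) for all x ∈ ℝⁿ. Then w is a quadratic polynomial. -/
open Real Filter Matrix
open scoped RealInnerProductSpace

noncomputable section

/-- Directional derivative. -/
def DD {n : ℕ} (v : EuclideanSpace ℝ (Fin n)) (f : EuclideanSpace ℝ (Fin n) → ℝ) :
    EuclideanSpace ℝ (Fin n) → ℝ := fun x => fderiv ℝ f x v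

/-- Coordinate vector. -/
def ee {n : ℕ} (i : Fin n) : EuclideanSpace ℝ (Fin n) := EuclideanSpace.single i 1

theorem DD_smooth {n : ℕ} (v : EuclideanSpace ℝ (Fin n)) {f : EuclideanSpace ℝ (Fin n) → ℝ}
    (hf : ContDiff ℝ (⊤ : ℕ∞) f) : ContDiff ℝ (⊤ : ℕ∞) (DD v f) := by
  have : ContDiff ℝ (⊤ : ℕ∞) (fderiv ℝ f) := hf.fderiv_right (by simp)
  exact this.clm_apply contDiff_const

theorem smooth_diff {n : ℕ} {f : EuclideanSpace ℝ (Fin n) → ℝ}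
    (hf : ContDiff ℝ (⊤ : ℕ∞) f) : Differentiable ℝ f := hf.differentiable (by simp)

theorem smooth_diff2 {n : ℕ} {f : EuclideanSpace ℝ (Fin n) → ℝ}
    (hf : ContDiff ℝ (⊤ : ℕ∞) f) : Differentiable ℝ (fderiv ℝ f) :=
  (hf.fderiv_right (m := (⊤ : ℕ∞)) (by simp)).differentiable (by simp)

theorem DD_DD {n : ℕ} (v u : EuclideanSpace ℝ (Fin n)) {f : EuclideanSpace ℝ (Fin n) → ℝ}
    (hf : ContDiff ℝ (⊤ : ℕ∞) f) (x : EuclideanSpace ℝ (Fin n)) :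
    DD v (DD u f) x = fderiv ℝ (fderiv ℝ f) x v u := by
  have h := smooth_diff2 hf x
  unfold DD
  rw [fderiv_clm_apply h (by fun_prop)]
  simp

theorem D2_symm {n : ℕ} (v u : EuclideanSpace ℝ (Fin n)) {f : EuclideanSpace ℝ (Fin n) → ℝ}
    (hf : ContDiff ℝ (⊤ : ℕ∞) f) (x : EuclideanSpace ℝ (Fin n)) :
    fderiv ℝ (fderiv ℝ f) x v u = fderiv ℝ (fderiv ℝ f) x u v := by
  have : IsSymmSndFDerivAt ℝ f x := by
    apply hf.contDiffAt.isSymmSndFDerivAt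
    simp only [minSmoothness_of_isRCLikeNormedField]
    exact WithTop.coe_le_coe.2 (le_top : (2 : ℕ∞) ≤ ⊤)
  exact this v u

theorem DD_comm {n : ℕ} (v u : EuclideanSpace ℝ (Fin n)) {f : EuclideanSpace ℝ (Fin n) → ℝ}
    (hf : ContDiff ℝ (⊤ : ℕ∞) f) : DD v (DD u f) = DD u (DD v f) := by
  ext x
  rw [DD_DD _ _ hf, DD_DD _ _ hf, D2_symm _ _ hf]

theorem step {n : ℕ} (e : EuclideanSpace ℝ (Fin n)) {f : EuclideanSpace ℝ (Fin n) → ℝ}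
    (hf : ContDiff ℝ (⊤ : ℕ∞) f) (a c : ℝ)
    (h : ∀ x, a * ∑ i, DD (ee i) (DD (ee i) f) x = (1/2) * fderiv ℝ f x x - c * f x) (x) :
    a * ∑ i, DD (ee i) (DD (ee i) (DD e f)) x
      = (1/2) * fderiv ℝ (DD e f) x x - (c - 1/2) * DD e f x := by
  have h1 : (fun x => a * ∑ i, DD (ee i) (DD (ee i) f) x)
    = (fun x => (1/2) * fderiv ℝ f x x - c * f x) := funext h
  have h2 := congrArg (fun g => fderiv ℝ g x e) h1
  have hs : ∀ i, DifferentiableAt ℝ (DD (ee i) (DD (ee i) f)) x := fun i =>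
    smooth_diff (DD_smooth _ (DD_smooth _ hf)) x
  have hd := smooth_diff hf x
  have hd2 := smooth_diff2 hf x
  have hd3 : DifferentiableAt ℝ (fun x => fderiv ℝ f x x) x := hd2.clm_apply differentiableAt_id
  rw [fderiv_const_mul (DifferentiableAt.fun_sum fun i _ => hs i), fderiv_fun_sum (fun i _ => hs i),
    fderiv_fun_sub (hd3.const_mul _) (hd.const_mul _), fderiv_const_mul hd3,
    fderiv_const_mul hd, fderiv_clm_apply hd2 (by fun_prop)] at h2
  have h3 : ∀ i, DD (ee i) (DD (ee i) (DD e f)) x = fderiv ℝ (DD (ee i) (DD (ee i) f)) x e := by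
    intro i
    rw [DD_comm _ _ hf, DD_comm _ _ (DD_smooth _ hf)]
    rfl
  have h4 : fderiv ℝ (DD e f) x x = fderiv ℝ (fderiv ℝ f) x e x := by
    rw [← D2_symm _ _ hf, ← DD_DD _ _ hf]; rfl
  simp only [h3, h4]
  simp at h2
  rw [h2]
  simp only [DD]
  ring

theorem vec_sum {n : ℕ} (x : EuclideanSpace ℝ (Fin n)) : ∑ i, x i • ee i = x := by
  have := (EuclideanSpace.basisFun (Fin n) ℝ).sum_repr x
  simpa [ee] using this

theorem quad_expand {n : ℕ} {f : EuclideanSpace ℝ (Fin n) → ℝ}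
    (x v : EuclideanSpace ℝ (Fin n)) :
    fderiv ℝ (fderiv ℝ f) x v v = ∑ i, ∑ j, Hess n f x i j * v i * v j := by
  conv_lhs => rw [← vec_sum v]
  simp only [map_sum, _root_.sum_apply, map_smul, _root_.smul_apply,
    Hess, Matrix.of_apply, iteratedFDeriv_two_apply, smul_eq_mul, Finset.mul_sum]
  rw [Finset.sum_comm]
  refine Finset.sum_congr rfl fun i _ => Finset.sum_congr rfl fun j _ => ?_
  simp [ee]
  ring

theorem quad_pos {n : ℕ} {f : EuclideanSpace ℝ (Fin n) → ℝ}
    (x v : EuclideanSpace ℝ (Fin n)) (hv : v ≠ 0) (h : (Hess n f x).PosDef) :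
    0 < fderiv ℝ (fderiv ℝ f) x v v := by
  rw [quad_expand]
  have h2 := h.dotProduct_mulVec_pos (x := fun i => v i) (by
    intro h0; apply hv; ext i; exact congrFun h0 i)
  refine h2.trans_eq ?_
  simp only [dotProduct, mulVec, Finset.mul_sum]
  refine Finset.sum_congr rfl fun i _ => Finset.sum_congr rfl fun j _ => ?_
  simp
  ring

theorem taylor {n : ℕ} {f : EuclideanSpace ℝ (Fin n) → ℝ}
    (hf : ContDiff ℝ (⊤ : ℕ∞) f) (x : EuclideanSpace ℝ (Fin n)) (Q : ℝ)
    (hQ : ∀ y, fderiv ℝ (fderiv ℝ f) y x x = Q) :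
    f x = f 0 + fderiv ℝ f 0 x + Q / 2 := by
  have hl : ∀ t : ℝ, HasDerivAt (fun t : ℝ => t • x) x t := fun t => by
    simpa using (hasDerivAt_id t).smul_const x
  have h1 : ∀ t : ℝ, HasDerivAt (fun t : ℝ => f (t • x)) (fderiv ℝ f (t • x) x) t := fun t =>
    (smooth_diff hf (t • x)).hasFDerivAt.comp_hasDerivAt t (hl t)
  have h2 : ∀ t : ℝ, HasDerivAt (fun t : ℝ => fderiv ℝ f (t • x) x) Q t := fun t => by
    have := (smooth_diff (DD_smooth x hf) (t • x)).hasFDerivAt.comp_hasDerivAt t (hl t)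
    have h3 : fderiv ℝ (DD x f) (t • x) x = Q := by
      rw [← hQ (t • x), ← DD_DD _ _ hf]; rfl
    rw [h3] at this
    exact this
  have h4 : ∀ t : ℝ, fderiv ℝ f (t • x) x = fderiv ℝ f 0 x + Q * t := by
    intro t
    have hd : ∀ t : ℝ, HasDerivAt (fun t : ℝ => fderiv ℝ f (t • x) x - Q * t) 0 t := fun t => by
      simpa using (h2 t).fun_sub ((hasDerivAt_id t).const_mul Q)
    have := is_const_of_deriv_eq_zero (fun t => (hd t).differentiableAt) (fun t => (hd t).deriv) t 0
    simp at this
    linarith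
  have hd : ∀ t : ℝ, HasDerivAt
      (fun t : ℝ => f (t • x) - fderiv ℝ f 0 x * t - Q / 2 * t ^ 2) 0 t := fun t => by
    have := ((h1 t).sub ((hasDerivAt_id t).const_mul (fderiv ℝ f 0 x))).sub
      ((hasDerivAt_pow 2 t).const_mul (Q / 2))
    refine this.congr_deriv ?_
    rw [h4 t]; simp; ring
  have := is_const_of_deriv_eq_zero (fun t => (hd t).differentiableAt) (fun t => (hd t).deriv) 1 0
  simp at this
  linarith

theorem DD_mul {n : ℕ} (v : EuclideanSpace ℝ (Fin n)) {f g : EuclideanSpace ℝ (Fin n) → ℝ}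
    (hf : ContDiff ℝ (⊤ : ℕ∞) f) (hg : ContDiff ℝ (⊤ : ℕ∞) g) (x) :
    DD v (fun y => f y * g y) x = DD v f x * g x + f x * DD v g x := by
  unfold DD
  rw [fderiv_fun_mul (smooth_diff hf x) (smooth_diff hg x)]
  simp
  ring

theorem fderiv_expand {n : ℕ} {f : EuclideanSpace ℝ (Fin n) → ℝ} (x v : EuclideanSpace ℝ (Fin n)) :
    fderiv ℝ f x v = ∑ i, v i * DD (ee i) f x := by
  conv_lhs => rw [← vec_sum v]
  simp [DD]

/-- Gaussian weight. -/
def rho {n : ℕ} (b : ℝ) (x : EuclideanSpace ℝ (Fin n)) : ℝ := Real.exp (-(b / 2) * ‖x‖ ^ 2)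

theorem rho_smooth {n : ℕ} (b : ℝ) : ContDiff ℝ (⊤ : ℕ∞) (rho (n := n) b) :=
  Real.contDiff_exp.comp (contDiff_const.mul (contDiff_norm_sq ℝ))

theorem rho_pos {n : ℕ} (b : ℝ) (x : EuclideanSpace ℝ (Fin n)) : 0 < rho b x := Real.exp_pos _

theorem rho_DD {n : ℕ} (b : ℝ) (i : Fin n) (x : EuclideanSpace ℝ (Fin n)) :
    DD (ee i) (rho b) x = - b * x i * rho b x := by
  have h := ((hasStrictFDerivAt_norm_sq x).hasFDerivAt.const_mul (-(b / 2))).exp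
  unfold DD
  have h2 : HasFDerivAt (rho b) _ x := h
  rw [h2.fderiv]
  have h3 : ⟪x, EuclideanSpace.single i (1:ℝ)⟫ = x i := by
    simp [EuclideanSpace.inner_single_right]
  simp [rho, ee, h3]
  ring

theorem rho_integrable {n : ℕ} (b : ℝ) (hb : 0 < b) :
    MeasureTheory.Integrable (rho (n := n) b) := by
  by_contra hc
  have h := GaussianFourier.integral_rexp_neg_mul_sq_norm (V := EuclideanSpace ℝ (Fin n))
    (half_pos hb)
  have h2 := MeasureTheory.integral_undef hc
  unfold rho at h2
  rw [h2] at h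
  have : 0 < (π / (b / 2)) ^ (Module.finrank ℝ (EuclideanSpace ℝ (Fin n)) / 2 : ℝ) := by
    positivity
  linarith

theorem integral_DD {n : ℕ} (v : EuclideanSpace ℝ (Fin n)) {f : EuclideanSpace ℝ (Fin n) → ℝ}
    (hf : ContDiff ℝ (⊤ : ℕ∞) f) (hc : HasCompactSupport f) :
    MeasureTheory.Integrable (DD v f) ∧ ∫ x, DD v f x = 0 := by
  have hc2 : HasCompactSupport (DD v f) := by
    exact hc.fderiv_apply (𝕜 := ℝ) v
  have hI := (DD_smooth v hf).continuous.integrable_of_hasCompactSupport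
    (μ := MeasureTheory.volume) hc2
  refine ⟨hI, ?_⟩
  have := integral_mul_fderiv_eq_neg_fderiv_mul_of_integrable (𝕜 := ℝ)
    (μ := (MeasureTheory.volume : MeasureTheory.Measure (EuclideanSpace ℝ (Fin n))))
    (f := fun _ => (1:ℝ)) (g := f) (v := v)
    (by simp) (by simpa [DD] using (show MeasureTheory.Integrable (fun x => DD v f x) from hI))
    (by simpa using hf.continuous.integrable_of_hasCompactSupport hc)
    (by simp) (fun x _ => smooth_diff hf x)
  simpa [DD] using this

theorem caccioppoli {n : ℕ} (b : ℝ) (hb : 0 < b) {v η : EuclideanSpace ℝ (Fin n) → ℝ}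
    (hv : ContDiff ℝ (⊤ : ℕ∞) v) (hη : ContDiff ℝ (⊤ : ℕ∞) η) (hc : HasCompactSupport η)
    (h : ∀ x, ∑ i, DD (ee i) (DD (ee i) v) x + ∑ i, (DD (ee i) v x) ^ 2 = b * fderiv ℝ v x x)
    (C : ℝ) (hC : ∀ x, ∑ i, (DD (ee i) η x) ^ 2 ≤ C) :
    ∫ x, η x ^ 2 * (rho b x * ∑ i, (DD (ee i) v x) ^ 2)
      ≤ 4 * C * ∫ x : EuclideanSpace ℝ (Fin n), rho b x := by
  set F : Fin n → EuclideanSpace ℝ (Fin n) → ℝ := fun i =>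
    DD (ee i) (fun y => (η y * η y) * (rho b y * DD (ee i) v y)) with hF
  have hFi : ∀ i, MeasureTheory.Integrable (F i) ∧ ∫ x, F i x = 0 := by
    intro i
    apply integral_DD
    · exact (hη.mul hη).mul ((rho_smooth b).mul (DD_smooth _ hv))
    · exact (hc.mul_right (f' := η)).mul_right
  have hFx : ∀ x, ∑ i, F i x = - (η x ^ 2 * (rho b x * ∑ i, (DD (ee i) v x) ^ 2))
      + 2 * η x * rho b x * ∑ i, DD (ee i) η x * DD (ee i) v x := by
    intro x
    have h1 : ∀ i, F i x = 2 * η x * rho b x * (DD (ee i) η x * DD (ee i) v x)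
        + η x ^ 2 * rho b x * DD (ee i) (DD (ee i) v) x
        - b * η x ^ 2 * rho b x * (x i * DD (ee i) v x) := by
      intro i
      simp only [hF]
      rw [DD_mul _ (hη.mul hη) ((rho_smooth b).mul (DD_smooth _ hv)), DD_mul _ hη hη,
        DD_mul _ (rho_smooth b) (DD_smooth _ hv), rho_DD]
      ring
    simp only [h1, Finset.sum_add_distrib, Finset.sum_sub_distrib, ← Finset.mul_sum]
    have h2 := h x
    rw [fderiv_expand] at h2
    linear_combination η x ^ 2 * rho b x * h2
  have hpt : ∀ x, η x ^ 2 * (rho b x * ∑ i, (DD (ee i) v x) ^ 2)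
      ≤ 4 * C * rho b x - 2 * ∑ i, F i x := by
    intro x
    rw [hFx]
    have h1 : 0 ≤ ∑ i, (η x * DD (ee i) v x - 2 * DD (ee i) η x) ^ 2 :=
      Finset.sum_nonneg fun i _ => sq_nonneg _
    have h2 : ∑ i, (η x * DD (ee i) v x - 2 * DD (ee i) η x) ^ 2
        = η x ^ 2 * ∑ i, (DD (ee i) v x) ^ 2 - 4 * η x * ∑ i, DD (ee i) η x * DD (ee i) v x
          + 4 * ∑ i, (DD (ee i) η x) ^ 2 := by
      simp only [Finset.mul_sum, ← Finset.sum_add_distrib, ← Finset.sum_sub_distrib]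
      exact Finset.sum_congr rfl fun i _ => by ring
    rw [h2] at h1
    have h3 := mul_nonneg (rho_pos b x).le h1
    have h4 := mul_le_mul_of_nonneg_left (hC x) (rho_pos b x).le
    nlinarith
  have hR := rho_integrable (n := n) b hb
  have hS : MeasureTheory.Integrable (fun x => ∑ i, F i x) :=
    MeasureTheory.integrable_finsetSum _ fun i _ => (hFi i).1
  have hL : MeasureTheory.Integrable
      (fun x => η x ^ 2 * (rho b x * ∑ i, (DD (ee i) v x) ^ 2)) := by
    apply Continuous.integrable_of_hasCompactSupport
    · have := hη.continuous
      have := (rho_smooth (n := n) b).continuous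
      have : ∀ i, Continuous (DD (ee i) v) := fun i => (DD_smooth _ hv).continuous
      fun_prop
    · have : HasCompactSupport (fun x => η x ^ 2) := by
        simp only [pow_two]
        exact hc.mul_right (f' := η)
      exact this.mul_right
  calc _ ≤ ∫ x, (4 * C * rho b x - 2 * ∑ i, F i x) :=
        MeasureTheory.integral_mono hL ((hR.const_mul _).sub (hS.const_mul _)) hpt
    _ = _ := by
        rw [MeasureTheory.integral_sub (hR.const_mul _) (hS.const_mul _),
          MeasureTheory.integral_const_mul, MeasureTheory.integral_const_mul,
          MeasureTheory.integral_finsetSum _ fun i _ => (hFi i).1]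
        simp [fun i => (hFi i).2]

theorem cutoffs (n : ℕ) : ∃ (η : ℝ → EuclideanSpace ℝ (Fin n) → ℝ) (C : ℝ), ∀ R, 0 < R →
    ContDiff ℝ (⊤ : ℕ∞) (η R) ∧ HasCompactSupport (η R) ∧ (∀ x, 0 ≤ η R x ∧ η R x ≤ 1) ∧
    (∀ x, ‖x‖ ≤ R → η R x = 1) ∧ (∀ x, 2 * R ≤ ‖x‖ → η R x = 0) ∧
    (∀ x, ∑ i, (DD (ee i) (η R) x) ^ 2 ≤ C / R ^ 2) := by
  let φ : ContDiffBump (0 : EuclideanSpace ℝ (Fin n)) := ⟨1, 2, by norm_num, by norm_num⟩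
  have hφ : ContDiff ℝ (⊤ : ℕ∞) φ := φ.contDiff
  have hcont : Continuous (fun x => ∑ i, (DD (ee i) φ x) ^ 2) := by
    have : ∀ i, Continuous (DD (ee i) φ) := fun i => (DD_smooth _ hφ).continuous
    fun_prop
  have hcs : HasCompactSupport (fun x => ∑ i, (DD (ee i) φ x) ^ 2) := by
    refine (φ.hasCompactSupport.fderiv (𝕜 := ℝ)).mono ?_
    intro x hx h0
    apply hx
    have h0 : fderiv ℝ φ x = 0 := h0
    simp [DD, h0]
  obtain ⟨C, hC⟩ := hcs.exists_bound_of_continuous hcont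
  refine ⟨fun R x => φ (R⁻¹ • x), C, fun R hR => ?_⟩
  have hnorm : ∀ x : EuclideanSpace ℝ (Fin n), ‖R⁻¹ • x‖ = ‖x‖ / R := fun x => by
    rw [norm_smul, Real.norm_eq_abs, abs_of_pos (inv_pos.2 hR)]; field_simp
  refine ⟨hφ.comp (contDiff_const_smul _), ?_, fun x => ⟨φ.nonneg, φ.le_one⟩, ?_, ?_, ?_⟩
  · exact φ.hasCompactSupport.comp_smul (inv_ne_zero hR.ne')
  · intro x hx
    apply φ.one_of_mem_closedBall
    rw [mem_closedBall_zero_iff, hnorm, div_le_iff₀ hR]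
    simpa [φ] using hx
  · intro x hx
    apply φ.zero_of_le_dist
    rw [dist_zero_right, hnorm, le_div_iff₀ hR]
    simpa [φ] using hx
  · intro x
    have h1 : ∀ i, DD (ee i) (fun x => φ (R⁻¹ • x)) x = R⁻¹ * DD (ee i) φ (R⁻¹ • x) := by
      intro i
      unfold DD
      have h2 : HasFDerivAt (fun x : EuclideanSpace ℝ (Fin n) => R⁻¹ • x)
        (R⁻¹ • ContinuousLinearMap.id ℝ (EuclideanSpace ℝ (Fin n))) x :=
        (hasFDerivAt_id x).const_smul R⁻¹
      have h3 := (smooth_diff hφ (R⁻¹ • x)).hasFDerivAt.comp x h2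
      have h4 := h3.fderiv
      simp only [Function.comp_def] at h4
      rw [h4]
      simp
    simp only [h1, mul_pow, ← Finset.mul_sum]
    have := (le_abs_self _).trans (hC (R⁻¹ • x))
    rw [div_eq_inv_mul, inv_pow]
    exact mul_le_mul_of_nonneg_left this (by positivity)

theorem liouville_log {n : ℕ} (b : ℝ) (hb : 0 < b) {v : EuclideanSpace ℝ (Fin n) → ℝ}
    (hv : ContDiff ℝ (⊤ : ℕ∞) v)
    (h : ∀ x, ∑ i, DD (ee i) (DD (ee i) v) x + ∑ i, (DD (ee i) v x) ^ 2 = b * fderiv ℝ v x x) (x) :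
    fderiv ℝ v x = 0 := by
  obtain ⟨η, C, hη⟩ := cutoffs n
  set S : EuclideanSpace ℝ (Fin n) → ℝ := fun x => ∑ i, (DD (ee i) v x) ^ 2 with hSdef
  have hS0 : ∀ x, 0 ≤ S x := fun x => Finset.sum_nonneg fun i _ => sq_nonneg _
  suffices hS : S x = 0 by
    have h1 := (Finset.sum_eq_zero_iff_of_nonneg (fun i _ => sq_nonneg (DD (ee i) v x))).1 hS
    ext y
    rw [fderiv_expand]
    simp only [_root_.zero_apply]
    refine Finset.sum_eq_zero fun i hi => ?_
    have := pow_eq_zero_iff (two_ne_zero) |>.1 (h1 i hi)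
    rw [this, mul_zero]
  by_contra hne
  set G : ℝ → EuclideanSpace ℝ (Fin n) → ℝ := fun R x => η R x ^ 2 * (rho b x * S x) with hG
  have hGc : ∀ R, 0 < R → Continuous (G R) ∧ HasCompactSupport (G R) := by
    intro R hR
    obtain ⟨h1, h2, -⟩ := hη R hR
    constructor
    · have := h1.continuous
      have := (rho_smooth (n := n) b).continuous
      have : ∀ i, Continuous (DD (ee i) v) := fun i => (DD_smooth _ hv).continuous
      simp only [hG, hSdef]
      fun_prop
    · have : HasCompactSupport (fun x => η R x ^ 2) := by
        simp only [pow_two]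
        exact h2.mul_right (f' := η R)
      exact this.mul_right
  have hGn : ∀ R x, 0 ≤ G R x := fun R x =>
    mul_nonneg (sq_nonneg _) (mul_nonneg (rho_pos b x).le (hS0 x))
  set r := ‖x‖ + 1 with hr
  have hr0 : 0 < r := by positivity
  have hpos : 0 < ∫ y, G r y := by
    refine (hGc r hr0).1.integral_pos_of_hasCompactSupport_nonneg_nonzero (hGc r hr0).2
      (hGn r) (x := x) ?_
    simp only [hG]
    rw [(hη r hr0).2.2.2.1 x (by linarith)]
    simp [hne, (rho_pos b x).ne']
  have hle : ∀ R, 2 * r ≤ R →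
      ∫ y, G r y ≤ 4 * (C / R ^ 2) * ∫ x : EuclideanSpace ℝ (Fin n), rho b x := by
    intro R hR
    have hR0 : 0 < R := by linarith
    obtain ⟨h1, h2, h3, h4, h5, h6⟩ := hη R hR0
    refine le_trans ?_ (caccioppoli b hb hv h1 h2 h _ h6)
    refine MeasureTheory.integral_mono ((hGc r hr0).1.integrable_of_hasCompactSupport (hGc r hr0).2)
      ((hGc R hR0).1.integrable_of_hasCompactSupport (hGc R hR0).2) fun y => ?_
    rcases le_total (2 * r) ‖y‖ with hy | hy
    · have : G r y = 0 := by simp [hG, (hη r hr0).2.2.2.2.1 y hy]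
      rw [this]; exact hGn R y
    · simp only [hG]
      rw [h4 y (by linarith)]
      have h7 := (hη r hr0).2.2.1 y
      apply mul_le_mul_of_nonneg_right _ (mul_nonneg (rho_pos b y).le (hS0 y))
      nlinarith [h7.1, h7.2]
  have hlim : Tendsto (fun R : ℝ => 4 * (C / R ^ 2) * ∫ x : EuclideanSpace ℝ (Fin n), rho b x)
      atTop (nhds (4 * 0 * ∫ x : EuclideanSpace ℝ (Fin n), rho b x)) := by
    refine Tendsto.mul_const _ (Tendsto.const_mul _ ?_)
    exact tendsto_const_nhds.div_atTop (tendsto_pow_atTop two_ne_zero)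
  have := ge_of_tendsto hlim (eventually_atTop.2 ⟨2 * r, hle⟩)
  simp at this
  linarith

theorem liouville {n : ℕ} {u : EuclideanSpace ℝ (Fin n) → ℝ}
    (hu : ContDiff ℝ (⊤ : ℕ∞) u) (hpos : ∀ x, 0 < u x)
    (h : ∀ x, √2 * ∑ i, DD (ee i) (DD (ee i) u) x = (1/2) * fderiv ℝ u x x) (x) :
    fderiv ℝ u x = 0 := by
  set v : EuclideanSpace ℝ (Fin n) → ℝ := fun x => Real.log (u x) with hvdef
  have hv : ContDiff ℝ (⊤ : ℕ∞) v := hu.log fun x => (hpos x).ne'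
  have hfu : ∀ x, fderiv ℝ u x = u x • fderiv ℝ v x := by
    intro x
    have := ((smooth_diff hu x).hasFDerivAt.log (hpos x).ne').fderiv
    rw [hvdef, this, smul_smul, mul_inv_cancel₀ (hpos x).ne', one_smul]
  have hD : ∀ i, DD (ee i) u = fun x => u x * DD (ee i) v x := by
    intro i; ext x; simp [DD, hfu x]
  have hDD : ∀ i x, DD (ee i) (DD (ee i) u) x
      = u x * (DD (ee i) (DD (ee i) v) x + (DD (ee i) v x) ^ 2) := by
    intro i x
    rw [hD i, DD_mul _ hu (DD_smooth _ hv), hD i]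
    ring
  have hs : (0:ℝ) < √2 := by positivity
  rw [hfu, liouville_log (1 / (2 * √2)) (by positivity) hv ?_ x, smul_zero]
  intro y
  have := h y
  simp only [hDD, ← Finset.mul_sum, Finset.sum_add_distrib, hfu y] at this
  simp only [_root_.smul_apply, smul_eq_mul] at this
  have h2 : √2 * (∑ i, DD (ee i) (DD (ee i) v) y + ∑ i, (DD (ee i) v y) ^ 2)
      = 1 / 2 * fderiv ℝ v y y := by
    apply mul_left_cancel₀ (hpos y).ne'
    linear_combination this
  field_simp
  linear_combination 2 * h2

theorem bernstein_semilinear (n : ℕ) (hn : 1 ≤ n)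
    (w : EuclideanSpace ℝ (Fin n) → ℝ)
    (hw : ContDiff ℝ (⊤ : ℕ∞) w)
    (hconv : ∀ x, (Hess n w x).PosDef)
    (heq : ∀ x, Real.sqrt 2 * (Hess n w x).trace
      = (1/2) * ⟪x, gradient w x⟫ - w x) :
    IsQuadPoly n w := by
  have e1 : ∀ x, √2 * ∑ i, DD (ee i) (DD (ee i) w) x = (1/2) * fderiv ℝ w x x - 1 * w x := by
    intro x
    have := heq x
    rw [real_inner_comm, gradient, InnerProductSpace.toDual_symm_apply] at this
    rw [one_mul, ← this]
    simp only [DD_DD _ _ hw, Matrix.trace, Matrix.diag, Hess, Matrix.of_apply,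
      iteratedFDeriv_two_apply]
    rfl
  have key : ∀ e y, fderiv ℝ (fderiv ℝ w) y e e = fderiv ℝ (fderiv ℝ w) 0 e e := by
    intro e y
    by_cases he : e = 0
    · simp [he]
    have e2 := step e (DD_smooth e hw) _ _ (step e hw _ _ e1)
    have hp : ∀ x, 0 < DD e (DD e w) x := fun x => by
      rw [DD_DD _ _ hw]; exact quad_pos x e he (hconv x)
    have hS := DD_smooth e (DD_smooth e hw)
    have h0 := liouville hS hp (fun x => by rw [e2 x]; ring)
    rw [← DD_DD _ _ hw, ← DD_DD _ _ hw]
    exact is_const_of_fderiv_eq_zero (smooth_diff hS) h0 y 0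
  refine ⟨Hess n w 0, gradient w 0, w 0, ?_, fun x => ?_⟩
  · have := (hconv 0).isHermitian
    rw [Matrix.IsHermitian, Matrix.conjTranspose_eq_transpose_of_trivial] at this
    exact this
  · rw [taylor hw x _ (key x), quad_expand, gradient, InnerProductSpace.toDual_symm_apply]
    ring
end
end

section
/- Let n ≥ 1, 0 < a < 1 and b = √(1 − a²). Let u : ℝⁿ → ℝ be a C² function with D²u(x) > −(a+b)I for all x ∈ ℝⁿ, satisfying (√(a²+1)/b) · Σ_{i=1}^n arctan((λ_i(D²u(x)) + a − b)/(λ_i(D²u(x)) + a + b)) = −u(x) + (1/2)⟨x, Du(x)⟩ for all x ∈ ℝⁿ. Define w(x) := (b/√(a²+1)) · u((a²+1)^{1/4} x / b) + (a/(2b))|x|² − nπ/4. Then w satisfies the special Lagrangian self-shrinker equation Σ_{i=1}^n arctan(λ_i(D²w(x))) = −w(x) + (1/2)⟨x, Dw(x)⟩ for all x ∈ ℝⁿ. -/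
open Real Filter Matrix
open scoped RealInnerProductSpace

noncomputable section

theorem eigs_affine {n : ℕ} (A : Matrix (Fin n) (Fin n) ℝ) (hA : A.IsHermitian) (α β : ℝ) :
    Finset.univ.val.map (eigs (α • A + β • (1 : Matrix (Fin n) (Fin n) ℝ)))
      = Finset.univ.val.map (fun i => α * eigs A i + β) := by
  have hB : (α • A + β • (1 : Matrix (Fin n) (Fin n) ℝ)).IsHermitian := by
    have hA' : Aᵀ = A := by simpa [Matrix.IsHermitian] using hA
    simp [Matrix.IsHermitian, hA']
  have h1 : (α • A + β • (1 : Matrix (Fin n) (Fin n) ℝ)).charpoly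
      = (Matrix.diagonal (fun i => α * hA.eigenvalues i + β)).charpoly := by
    have h2 : α • A + β • (1 : Matrix (Fin n) (Fin n) ℝ)
        = (hA.eigenvectorUnitary : Matrix (Fin n) (Fin n) ℝ)
          * Matrix.diagonal (fun i => α * hA.eigenvalues i + β)
          * (star hA.eigenvectorUnitary : Matrix (Fin n) (Fin n) ℝ) := by
      have h3 : Matrix.diagonal (fun i => α * hA.eigenvalues i + β)
          = α • Matrix.diagonal (hA.eigenvalues) + β • (1 : Matrix (Fin n) (Fin n) ℝ) := by
        ext i j
        by_cases h : i = j
        · subst h; simp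
        · simp [h]
      have h4 := hA.spectral_theorem
      rw [Unitary.conjStarAlgAut_apply] at h4
      have h5 : (hA.eigenvectorUnitary : Matrix (Fin n) (Fin n) ℝ)
          * (star hA.eigenvectorUnitary : Matrix (Fin n) (Fin n) ℝ) = 1 := by simp
      have h6 : (RCLike.ofReal ∘ hA.eigenvalues : Fin n → ℝ) = hA.eigenvalues := by
        ext i; simp
      rw [h6] at h4
      rw [h3, mul_add, add_mul, Matrix.mul_smul, Matrix.smul_mul, Matrix.mul_smul,
        Matrix.smul_mul, mul_one, h5, ← h4]
    rw [h2, Matrix.charpoly_mul_comm, ← mul_assoc]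
    simp
  have h2 := hB.roots_charpoly_eq_eigenvalues
  rw [h1, Matrix.charpoly_diagonal, Polynomial.roots_prod _ _ (Finset.prod_ne_zero_iff.mpr
    fun i _ => Polynomial.X_sub_C_ne_zero _)] at h2
  simp only [eigs, hA, hB, dif_pos]
  simp only [Polynomial.roots_X_sub_C, Multiset.bind_singleton] at h2
  exact h2.symm

theorem sum_eigs_affine {n : ℕ} (A : Matrix (Fin n) (Fin n) ℝ) (hA : A.IsHermitian) (α β : ℝ)
    (f : ℝ → ℝ) :
    ∑ i, f (eigs (α • A + β • (1 : Matrix (Fin n) (Fin n) ℝ)) i)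
      = ∑ i, f (α * eigs A i + β) := by
  have h := congrArg (fun m => (Multiset.map f m).sum) (eigs_affine A hA α β)
  simp only [Multiset.map_map] at h
  exact h

theorem eigs_pos {n : ℕ} (A : Matrix (Fin n) (Fin n) ℝ) (hA : A.IsHermitian) (β : ℝ)
    (hp : (A + β • (1 : Matrix (Fin n) (Fin n) ℝ)).PosDef) (i : Fin n) : 0 < eigs A i + β := by
  have h := eigs_affine A hA 1 β
  have hm : eigs A i + β ∈ Finset.univ.val.map (fun i => 1 * eigs A i + β) :=
    Multiset.mem_map.mpr ⟨i, by simp, by simp⟩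
  rw [← h, one_smul] at hm
  obtain ⟨j, -, hj⟩ := Multiset.mem_map.mp hm
  rw [← hj]
  have hh := hp.1
  simp only [eigs, hh, dif_pos]
  exact hp.eigenvalues_pos j

theorem arctan_shift (μ : ℝ) (h : 0 < μ + 1) :
    arctan ((μ - 1) / (μ + 1)) = arctan μ - π / 4 := by
  have h1 : arctan ((μ - 1) / (μ + 1)) + arctan 1 = arctan μ := by
    rw [Real.arctan_add]
    · congr 1
      have : (μ + 1) - (μ - 1) ≠ 0 := by norm_num
      field_simp
      ring
    · rw [mul_one, div_lt_one h]; linarith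
  rw [Real.arctan_one] at h1
  linarith

theorem hasFDerivAt_w {n : ℕ} (u w : EuclideanSpace ℝ (Fin n) → ℝ) (hu : ContDiff ℝ 2 u)
    (p c q r : ℝ) (hw : ∀ x, w x = p * u (c • x) + q * ‖x‖ ^ 2 - r)
    (x : EuclideanSpace ℝ (Fin n)) :
    HasFDerivAt w ((p * c) • fderiv ℝ u (c • x) + (2 * q) • innerSL ℝ x) x := by
  have hc : HasFDerivAt (fun x : EuclideanSpace ℝ (Fin n) => c • x)
      (c • ContinuousLinearMap.id ℝ (EuclideanSpace ℝ (Fin n))) x :=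
    (hasFDerivAt_id x).const_smul c
  have h1 := ((hu.differentiable (by norm_num)).differentiableAt
    (x := c • x)).hasFDerivAt.comp x hc
  have h2 : HasFDerivAt (fun x : EuclideanSpace ℝ (Fin n) => ‖x‖ ^ 2) (2 • innerSL ℝ x) x :=
    (hasStrictFDerivAt_norm_sq x).hasFDerivAt
  have h3 := ((h1.const_mul p).add (h2.const_mul q)).sub_const r
  rw [show w = fun x => p * u (c • x) + q * ‖x‖ ^ 2 - r from funext hw]
  refine h3.congr_fderiv ?_
  ext v
  simp
  ring

theorem hess_w {n : ℕ} (u w : EuclideanSpace ℝ (Fin n) → ℝ) (hu : ContDiff ℝ 2 u)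
    (p c q r : ℝ) (hw : ∀ x, w x = p * u (c • x) + q * ‖x‖ ^ 2 - r)
    (x : EuclideanSpace ℝ (Fin n)) :
    Hess n w x = (p * c ^ 2) • Hess n u (c • x)
      + (2 * q) • (1 : Matrix (Fin n) (Fin n) ℝ) := by
  have hf : fderiv ℝ w = fun x => (p * c) • fderiv ℝ u (c • x) + (2 * q) • innerSL ℝ x :=
    funext fun x => (hasFDerivAt_w u w hu p c q r hw x).fderiv
  have hc : HasFDerivAt (fun x : EuclideanSpace ℝ (Fin n) => c • x)
      (c • ContinuousLinearMap.id ℝ (EuclideanSpace ℝ (Fin n))) x :=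
    (hasFDerivAt_id x).const_smul c
  have hd : Differentiable ℝ (fderiv ℝ u) :=
    (hu.fderiv_right (m := 1) (by norm_num)).differentiable (by norm_num)
  have h1 := (hd (c • x)).hasFDerivAt.comp x hc
  have h2 : HasFDerivAt (fun x : EuclideanSpace ℝ (Fin n) => innerSL ℝ x) (innerSL ℝ) x :=
    (innerSL ℝ : EuclideanSpace ℝ (Fin n) →L[ℝ] _).hasFDerivAt
  have h3 := (h1.const_smul (p * c)).add (h2.const_smul (2 * q))
  have h4 := (h3.congr_of_eventuallyEq (f₁ := fderiv ℝ w)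
    (Filter.Eventually.of_forall fun y => congrFun hf y)).fderiv
  have h5 : ∀ v z, fderiv ℝ (fderiv ℝ w) x v z
      = p * c * (fderiv ℝ (fderiv ℝ u) (c • x) (c • v) z) + 2 * q * ⟪v, z⟫ := by
    intro v z
    rw [h4]
    rfl
  ext i j
  simp only [Hess, Matrix.of_apply, iteratedFDeriv_two_apply, h5, Matrix.add_apply,
    Matrix.smul_apply]
  by_cases hij : i = j
  · subst hij
    simp
    ring
  · simp [hij, EuclideanSpace.inner_single_left]
    ring

theorem transform_to_special_lagrangian (n : ℕ) (hn : 1 ≤ n) (a b : ℝ)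
    (ha0 : 0 < a) (ha1 : a < 1) (hb : b = Real.sqrt (1 - a ^ 2))
    (u : EuclideanSpace ℝ (Fin n) → ℝ)
    (hu : ContDiff ℝ 2 u)
    (hadm : ∀ x, (Hess n u x + (a + b) • (1 : Matrix (Fin n) (Fin n) ℝ)).PosDef)
    (heq : ∀ x, (Real.sqrt (a ^ 2 + 1) / b) *
        ∑ i, Real.arctan ((eigs (Hess n u x) i + a - b) / (eigs (Hess n u x) i + a + b))
      = -u x + (1/2) * ⟪x, gradient u x⟫)
    (w : EuclideanSpace ℝ (Fin n) → ℝ)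
    (hw : ∀ x, w x = (b / Real.sqrt (a ^ 2 + 1)) * u (((a ^ 2 + 1) ^ ((1:ℝ)/4) / b) • x)
      + (a / (2 * b)) * ‖x‖ ^ 2 - n * π / 4) :
    ∀ x, ∑ i, Real.arctan (eigs (Hess n w x) i)
      = -w x + (1/2) * ⟪x, gradient w x⟫ := by
  intro x
  have hb2 : 0 < 1 - a ^ 2 := by nlinarith
  have hb0 : 0 < b := hb ▸ Real.sqrt_pos.mpr hb2
  have hs0 : 0 < Real.sqrt (a ^ 2 + 1) := Real.sqrt_pos.mpr (by positivity)
  have hcs : ((a ^ 2 + 1) ^ ((1:ℝ)/4)) ^ 2 = Real.sqrt (a ^ 2 + 1) := by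
    rw [Real.sqrt_eq_rpow, ← Real.rpow_natCast, ← Real.rpow_mul (by positivity)]
    norm_num
  generalize (a ^ 2 + 1) ^ ((1:ℝ)/4) = t at *
  generalize Real.sqrt (a ^ 2 + 1) = s at *
  have hA : ∀ y, (Hess n u y).IsHermitian := by
    intro y
    have h := (hadm y).1
    have h1 : ((a + b) • (1 : Matrix (Fin n) (Fin n) ℝ)).IsHermitian := by
      simp [Matrix.IsHermitian]
    have := h.sub h1
    simpa using this
  have hH := hess_w u w hu _ _ _ _ hw x
  have hg := hasFDerivAt_w u w hu _ _ _ _ hw x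
  have hk : b / s * (t / b) ^ 2 = 1 / b := by
    rw [div_pow, hcs]; field_simp
  have hq : 2 * (a / (2 * b)) = a / b := by field_simp
  rw [hk, hq] at hH
  rw [hH, sum_eigs_affine _ (hA _)]
  have e := heq ((t / b) • x)
  have hgw : ⟪x, gradient w x⟫ = fderiv ℝ w x x := by
    rw [real_inner_comm, gradient, InnerProductSpace.toDual_symm_apply]
  have hgu : ⟪(t / b) • x, gradient u ((t / b) • x)⟫ = (t / b) * fderiv ℝ u ((t / b) • x) x := by
    rw [real_inner_comm, gradient, InnerProductSpace.toDual_symm_apply, map_smul, smul_eq_mul]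
  rw [hgw, hg.fderiv, hw x]
  rw [hgu] at e
  have hsum : ∀ i, arctan ((eigs (Hess n u ((t / b) • x)) i + a - b)
        / (eigs (Hess n u ((t / b) • x)) i + a + b))
      = arctan (1 / b * eigs (Hess n u ((t / b) • x)) i + a / b) - π / 4 := by
    intro i
    have hp := eigs_pos _ (hA ((t / b) • x)) (a + b) (hadm _) i
    generalize eigs (Hess n u ((t / b) • x)) i = l at *
    rw [← arctan_shift]
    · congr 1
      have h1 : l + a + b ≠ 0 := by linarith
      have h2 : 1 / b * l + a / b + 1 = (l + a + b) / b := by field_simp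
      have h3 : 1 / b * l + a / b - 1 = (l + a - b) / b := by field_simp
      rw [h2, h3]
      field_simp
    · have h2 : 1 / b * l + a / b + 1 = (l + (a + b)) / b := by field_simp; ring
      rw [h2]; positivity
  simp only [hsum, Finset.sum_sub_distrib] at e
  simp only [Finset.sum_const, Finset.card_univ, Fintype.card_fin, nsmul_eq_mul] at e
  simp only [_root_.add_apply, _root_.smul_apply, smul_eq_mul,
    innerSL_apply_apply, real_inner_self_eq_norm_sq]
  generalize (∑ i, arctan (1 / b * eigs (Hess n u ((t / b) • x)) i + a / b)) = S at *
  have e2 : S - n * (π / 4) = b / s * (s / b * (S - n * (π / 4))) := by field_simp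
  rw [e] at e2
  rw [hq]
  have hq2 : a / b = 2 * (a / (2 * b)) := hq.symm
  rw [hq2]
  linear_combination e2
end
end

section
/- There exists a smooth function w₁ : ℝ → ℝ such that 0 < w₁''(t) < 1 for all t ∈ ℝ, w₁ satisfies w₁''(t)/(1 − w₁''(t)) = exp((1/2) t w₁'(t) − w₁(t)) for all t ∈ ℝ, and w₁ is not a quadratic polynomial (i.e. w₁'' is not constant). -/
open Real

/-- The vector field, with the momentum truncated at height `M`. -/
noncomputable def auxG (M t : ℝ) (x : ℝ × ℝ) : ℝ × ℝ :=
  (max (-M) (min x.2 M), Real.sigmoid (t * x.2 / 2 - x.1))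

/-- The vector field without truncation. -/
noncomputable def auxF (t : ℝ) (x : ℝ × ℝ) : ℝ × ℝ :=
  (x.2, Real.sigmoid (t * x.2 / 2 - x.1))

lemma aux_sig (a b : ℝ) : |Real.sigmoid a - Real.sigmoid b| ≤ |a - b| := by
  have := Convex.norm_image_sub_le_of_norm_hasDerivWithin_le (f := Real.sigmoid)
    (f' := fun x => Real.sigmoid x * (1 - Real.sigmoid x)) (s := Set.univ) (C := 1) (x := b) (y := a)
    (fun x _ => (hasDerivAt_sigmoid x).hasDerivWithinAt)
    (fun x _ => by
      have h1 := Real.sigmoid_pos x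
      have h2 := Real.sigmoid_lt_one x
      rw [Real.norm_eq_abs, abs_le]
      constructor <;> nlinarith) convex_univ (Set.mem_univ _) (Set.mem_univ _)
  simpa [Real.norm_eq_abs] using this

lemma aux_sig2 {T t : ℝ} (ht : t ∈ Set.Icc (-T) T) (x y : ℝ × ℝ) :
    |Real.sigmoid (t * x.2 / 2 - x.1) - Real.sigmoid (t * y.2 / 2 - y.1)|
      ≤ (T + 1) * dist x y := by
  refine (aux_sig _ _).trans ?_
  have h1 : |x.1 - y.1| ≤ dist x y := by
    rw [Prod.dist_eq, ← Real.dist_eq]; exact le_max_left _ _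
  have h2 : |x.2 - y.2| ≤ dist x y := by
    rw [Prod.dist_eq, ← Real.dist_eq]; exact le_max_right _ _
  have ht' : |t| ≤ T := abs_le.2 ht
  have h3 : |t * (x.2 - y.2)| ≤ T * dist x y := by
    rw [abs_mul]
    exact mul_le_mul ht' h2 (abs_nonneg _) ((abs_nonneg _).trans ht')
  rw [abs_le] at *
  constructor <;> nlinarith

lemma auxG_lip {M T t : ℝ} (hT : 0 ≤ T) (ht : t ∈ Set.Icc (-T) T) :
    LipschitzWith (T + 1).toNNReal (auxG M t) := by
  refine LipschitzWith.of_dist_le_mul fun x y => ?_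
  rw [Real.coe_toNNReal _ (by linarith), Prod.dist_eq]
  refine max_le ?_ (aux_sig2 ht x y)
  have h2 : |x.2 - y.2| ≤ dist x y := by
    rw [Prod.dist_eq, ← Real.dist_eq]; exact le_max_right _ _
  have h3 : |max (-M) (min x.2 M) - max (-M) (min y.2 M)| ≤ |x.2 - y.2| := by
    refine (abs_max_sub_max_le_max _ _ _ _).trans ?_
    simp only [sub_self, abs_zero]
    refine max_le (abs_nonneg _) ((abs_min_sub_min_le_max _ _ _ _).trans ?_)
    simp
  have := dist_nonneg (x := x) (y := y)
  rw [Real.dist_eq]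
  simp only [auxG]
  nlinarith

lemma auxF_lip {T t : ℝ} (hT : 0 ≤ T) (ht : t ∈ Set.Icc (-T) T) :
    LipschitzWith (T + 1).toNNReal (auxF t) := by
  refine LipschitzWith.of_dist_le_mul fun x y => ?_
  rw [Real.coe_toNNReal _ (by linarith), Prod.dist_eq]
  refine max_le ?_ (aux_sig2 ht x y)
  have h2 : dist x.2 y.2 ≤ dist x y := le_max_right _ _
  have := dist_nonneg (x := x) (y := y)
  simp only [auxF]
  nlinarith

lemma aux_local (T : ℝ) (hT : 0 < T) : ∃ α : ℝ → ℝ × ℝ, α 0 = (0, 1) ∧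
    ∀ t ∈ Set.Ioo (-T) T, HasDerivAt α (auxF t (α t)) t := by
  have h0 : (0:ℝ) ∈ Set.Icc (-T) T := ⟨by linarith, hT.le⟩
  have hPL : IsPicardLindelof (auxG (T + 1)) (⟨0, h0⟩ : Set.Icc (-T) T) ((0, 1) : ℝ × ℝ)
      ((T + 1) * T).toNNReal 0 (T + 1).toNNReal (T + 1).toNNReal := by
    refine ⟨fun t ht => (auxG_lip hT.le ht).lipschitzOnWith, fun x _ => ?_, fun t ht x _ => ?_, ?_⟩
    · refine Continuous.continuousOn ?_
      have := continuous_sigmoid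
      unfold auxG
      fun_prop
    · rw [Real.coe_toNNReal _ (by linarith), Prod.norm_def]
      refine max_le ?_ ?_
      · rw [Real.norm_eq_abs, abs_le]
        exact ⟨le_max_left _ _, max_le (by linarith) (min_le_right _ _)⟩
      · have h1 := Real.sigmoid_pos (t * x.2 / 2 - x.1)
        have h2 := Real.sigmoid_lt_one (t * x.2 / 2 - x.1)
        rw [Real.norm_eq_abs, abs_le]
        simp only [auxG]
        constructor <;> linarith
    · rw [Real.coe_toNNReal _ (by linarith), Real.coe_toNNReal _ (by positivity)]
      simp
  obtain ⟨α, hα0, hα⟩ := hPL.exists_eq_forall_mem_Icc_hasDerivWithinAt₀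
  have hα0 : α 0 = (0, 1) := hα0
  refine ⟨α, hα0, fun t ht => ?_⟩
  have ht' : t ∈ Set.Icc (-T) T := Set.Ioo_subset_Icc_self ht
  have hb := Convex.norm_image_sub_le_of_norm_hasDerivWithin_le (f := fun t => (α t).2)
    (f' := fun t => Real.sigmoid (t * (α t).2 / 2 - (α t).1)) (s := Set.Icc (-T) T) (C := 1)
    (x := 0) (y := t) (fun x hx => (hα x hx).snd)
    (fun x _ => by
      have h1 := Real.sigmoid_pos (x * (α x).2 / 2 - (α x).1)
      have h2 := Real.sigmoid_lt_one (x * (α x).2 / 2 - (α x).1)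
      rw [Real.norm_eq_abs, abs_le]
      constructor <;> linarith) (convex_Icc _ _) h0 ht'
  simp only [hα0, Real.norm_eq_abs, sub_zero, one_mul] at hb
  have hb2 : |(α t).2 - 1| ≤ T := hb.trans (abs_le.2 ht')
  rw [abs_le] at hb2
  have hG : auxG (T + 1) t (α t) = auxF t (α t) := by
    unfold auxG auxF
    rw [min_eq_left (by linarith), max_eq_right (by linarith)]
  rw [← hG]
  exact (hα t ht').hasDerivAt (Icc_mem_nhds ht.1 ht.2)

lemma aux_global : ∃ α : ℝ → ℝ × ℝ, α 0 = (0, 1) ∧ ∀ t, HasDerivAt α (auxF t (α t)) t := by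
  choose x hx0 hx using fun n : ℕ => aux_local ((n : ℝ) + 1) (by positivity)
  have key : ∀ m n : ℕ, m ≤ n → Set.EqOn (x m) (x n) (Set.Ioo (-((m:ℝ) + 1)) ((m:ℝ) + 1)) := by
    intro m n hmn
    have hmn' : (m:ℝ) ≤ n := by exact_mod_cast hmn
    have hm : (0:ℝ) ≤ m := Nat.cast_nonneg m
    refine ODE_solution_unique_of_mem_Ioo (v := auxF) (s := fun _ => Set.univ) (t₀ := 0)
      (K := ((m:ℝ) + 1 + 1).toNNReal)
      (fun t ht => (auxF_lip (by linarith) (Set.Ioo_subset_Icc_self ht)).lipschitzOnWith)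
      ⟨by linarith, by linarith⟩ (fun t ht => ⟨hx m t ht, trivial⟩)
      (fun t ht => ⟨hx n t ⟨by linarith [ht.1], by linarith [ht.2]⟩, trivial⟩) ?_
    rw [hx0, hx0]
  have hmem : ∀ t : ℝ, t ∈ Set.Ioo (-((⌈|t|⌉₊ : ℝ) + 1)) ((⌈|t|⌉₊ : ℝ) + 1) := by
    intro t
    have := Nat.le_ceil |t|
    have h2 := abs_le.1 this
    exact ⟨by linarith [h2.1], by linarith [h2.2]⟩
  have key2 : ∀ (n : ℕ) (s : ℝ), s ∈ Set.Ioo (-((n:ℝ) + 1)) ((n:ℝ) + 1) →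
      x ⌈|s|⌉₊ s = x n s := by
    intro n s hs
    rcases le_total n ⌈|s|⌉₊ with h | h
    · exact (key _ _ h hs).symm
    · exact key _ _ h (hmem s)
  refine ⟨fun t => x ⌈|t|⌉₊ t, by simp [hx0], fun t => ?_⟩
  refine (hx ⌈|t|⌉₊ t (hmem t)).congr_of_eventuallyEq ?_
  filter_upwards [Ioo_mem_nhds (hmem t).1 (hmem t).2] with s hs
  exact key2 _ s hs

theorem ode_nonquadratic_solution :
    ∃ w₁ : ℝ → ℝ, ContDiff ℝ (⊤ : ℕ∞) w₁ ∧
      (∀ t : ℝ, 0 < deriv (deriv w₁) t ∧ deriv (deriv w₁) t < 1) ∧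
      (∀ t : ℝ, deriv (deriv w₁) t / (1 - deriv (deriv w₁) t)
        = Real.exp ((1/2) * t * deriv w₁ t - w₁ t)) ∧
      ¬ ∃ α β c : ℝ, ∀ t : ℝ, w₁ t = α * t ^ 2 + β * t + c := by
  obtain ⟨α, h0, hα⟩ := aux_global
  have h1 : ∀ t, HasDerivAt (fun t => (α t).1) (α t).2 t := fun t => (hα t).fst
  have h2 : ∀ t, HasDerivAt (fun t => (α t).2)
      (Real.sigmoid (t * (α t).2 / 2 - (α t).1)) t := fun t => (hα t).snd
  have d1 : deriv (fun t => (α t).1) = fun t => (α t).2 := funext fun t => (h1 t).deriv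
  have d2 : deriv (fun t => (α t).2) = fun t => Real.sigmoid (t * (α t).2 / 2 - (α t).1) :=
    funext fun t => (h2 t).deriv
  have hs : ∀ n : ℕ, ContDiff ℝ n (fun t => (α t).1) ∧ ContDiff ℝ n (fun t => (α t).2) := by
    intro n
    induction n with
    | zero =>
      constructor
      · exact contDiff_zero.2 (continuous_iff_continuousAt.2 fun t => (h1 t).continuousAt)
      · exact contDiff_zero.2 (continuous_iff_continuousAt.2 fun t => (h2 t).continuousAt)
    | succ n ih =>
      obtain ⟨i1, i2⟩ := ih
      push_cast
      constructor
      · refine contDiff_succ_iff_deriv.2 ⟨fun t => (h1 t).differentiableAt, by simp, ?_⟩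
        rw [d1]; exact i2
      · refine contDiff_succ_iff_deriv.2 ⟨fun t => (h2 t).differentiableAt, by simp, ?_⟩
        rw [d2]
        exact (contDiff_sigmoid.of_le le_top).comp
          (((contDiff_id.mul i2).div_const 2).sub i1)
  refine ⟨fun t => (α t).1, contDiff_infty.2 fun n => (hs n).1, ?_, ?_, ?_⟩
  · intro t
    rw [d1, d2]
    exact ⟨Real.sigmoid_pos _, Real.sigmoid_lt_one _⟩
  · intro t
    rw [d1, d2]
    simp only
    rw [show (1/2) * t * (α t).2 - (α t).1 = t * (α t).2 / 2 - (α t).1 by ring]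
    generalize t * (α t).2 / 2 - (α t).1 = y
    have hp := Real.sigmoid_pos y
    rw [← Real.sigmoid_neg, ← Real.sigmoid_mul_rexp_neg, Real.exp_neg]
    have := Real.exp_pos y
    field_simp
  · rintro ⟨a, b, c, h⟩
    have hd : ∀ t, (α t).2 = 2 * a * t + b := by
      intro t
      have e : (fun t => (α t).1) = fun t => a * t ^ 2 + b * t + c := funext h
      have hh : HasDerivAt (fun t : ℝ => a * t ^ 2 + b * t + c) (2 * a * t + b) t := by
        have := (((hasDerivAt_pow 2 t).const_mul a).add ((hasDerivAt_id t).const_mul b)).add_const c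
        exact this.congr_deriv (by norm_num; ring)
      rw [← e] at hh
      exact (h1 t).unique hh
    have hdd : ∀ t, Real.sigmoid (t * (α t).2 / 2 - (α t).1) = 2 * a := by
      intro t
      have e : (fun t => (α t).2) = fun t => 2 * a * t + b := funext hd
      have hh : HasDerivAt (fun t : ℝ => 2 * a * t + b) (2 * a) t := by
        have := ((hasDerivAt_id t).const_mul (2 * a)).add_const b
        exact this.congr_deriv (by simp)
      rw [← e] at hh
      exact (h2 t).unique hh
    have hb : b = 1 := by
      have := hd 0
      rw [h0] at this
      simpa using this.symm
    have := Real.sigmoid_injective ((hdd 0).trans (hdd 1).symm)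
    have e0 := h 0
    have e1 := h 1
    simp only at e0 e1
    rw [hd 0, hd 1, e0, e1, hb] at this
    norm_num at this
    linarith
end

section
/- Let n ≥ 1 and let u : ℝⁿ → ℝ be a C² function with D²u(x) > −I for all x ∈ ℝⁿ, satisfying −√2 · Σ_{i=1}^n 1/(1 + λ_i(D²u(x))) = −u(x) + (1/2)⟨x, Du(x)⟩ for all x ∈ ℝⁿ. Then for every unit vector θ ∈ ℝⁿ, the function r ↦ u(rθ)/r² is strictly decreasing on (0, ∞); consequently u(x) ≤ (max_{|y|=1} u(y)) · |x|² for all x with |x| ≥ 1. -/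
open Real Filter Matrix
open scoped RealInnerProductSpace

noncomputable section

lemma eigs_gt {n : ℕ} {A : Matrix (Fin n) (Fin n) ℝ} (hA : (A + 1).PosDef) (i : Fin n) :
    0 < 1 + eigs A i := by
  have hH : A.IsHermitian := by
    have h := hA.isHermitian.sub (Matrix.isHermitian_one (n := Fin n) (α := ℝ))
    simpa using h
  have h1 := hH.mulVec_eigenvectorBasis i
  have hne : (⇑(hH.eigenvectorBasis i) : Fin n → ℝ) ≠ 0 := by
    intro h0
    have h2 : hH.eigenvectorBasis i = 0 := by
      ext j; exact congrFun h0 j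
    exact hH.eigenvectorBasis.orthonormal.ne_zero i h2
  have h3 := hA.dotProduct_mulVec_pos hne
  rw [Matrix.add_mulVec, h1, Matrix.one_mulVec] at h3
  have h4 : eigs A i = hH.eigenvalues i := by unfold eigs; rw [dif_pos hH]
  rw [h4]
  have h5 : 0 < star (⇑(hH.eigenvectorBasis i) : Fin n → ℝ) ⬝ᵥ (⇑(hH.eigenvectorBasis i) : Fin n → ℝ) :=
    Matrix.dotProduct_star_self_pos_iff.2 hne
  rw [dotProduct_add, dotProduct_smul, smul_eq_mul] at h3
  nlinarith

theorem radial_monotonicity_and_quadratic_growth (n : ℕ) (hn : 1 ≤ n)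
    (u : EuclideanSpace ℝ (Fin n) → ℝ)
    (hu : ContDiff ℝ 2 u)
    (hadm : ∀ x, (Hess n u x + 1).PosDef)
    (heq : ∀ x, -Real.sqrt 2 * ∑ i, 1 / (1 + eigs (Hess n u x) i)
      = -u x + (1/2) * ⟪x, gradient u x⟫) :
    (∀ θ : EuclideanSpace ℝ (Fin n), ‖θ‖ = 1 →
      StrictAntiOn (fun r : ℝ => u (r • θ) / r ^ 2) (Set.Ioi (0:ℝ))) ∧
    (∀ x : EuclideanSpace ℝ (Fin n), 1 ≤ ‖x‖ →
      u x ≤ (⨆ y : Metric.sphere (0 : EuclideanSpace ℝ (Fin n)) 1, u ↑y) * ‖x‖ ^ 2) := by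
  have hneg : ∀ x, -u x + (1/2) * ⟪x, gradient u x⟫ < 0 := by
    intro x
    rw [← heq x]
    have hs : 0 < ∑ i, 1 / (1 + eigs (Hess n u x) i) := by
      haveI : Nonempty (Fin n) := ⟨⟨0, hn⟩⟩
      exact Finset.sum_pos (fun i _ => one_div_pos.2 (eigs_gt (hadm x) i)) Finset.univ_nonempty
    have h2 : 0 < Real.sqrt 2 := by positivity
    nlinarith [mul_pos h2 hs]
  have hder : ∀ (θ : EuclideanSpace ℝ (Fin n)) (r : ℝ), 0 < r →
      HasDerivAt (fun r : ℝ => u (r • θ) / r ^ 2)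
        ((⟪gradient u (r • θ), θ⟫ * r ^ 2 - u (r • θ) * (2 * r)) / (r ^ 2) ^ 2) r := by
    intro θ r hr
    have hd : DifferentiableAt ℝ u (r • θ) := (hu.differentiable (by norm_num)) _
    have hg := hd.hasGradientAt.hasFDerivAt
    have hl : HasDerivAt (fun r : ℝ => r • θ) θ r := by
      simpa using (hasDerivAt_id r).smul_const θ
    have hc := hg.comp_hasDerivAt r hl
    have hp : HasDerivAt (fun r : ℝ => r ^ 2) (2 * r) r := by
      simpa using hasDerivAt_pow 2 r
    have hq := hc.div hp (by positivity)
    simp only [InnerProductSpace.toDual_apply_apply] at hq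
    exact hq
  have hanti : ∀ θ : EuclideanSpace ℝ (Fin n), ‖θ‖ = 1 →
      StrictAntiOn (fun r : ℝ => u (r • θ) / r ^ 2) (Set.Ioi (0:ℝ)) := by
    intro θ _
    apply strictAntiOn_of_deriv_neg (convex_Ioi 0)
    · intro r hr
      exact (hder θ r hr).continuousAt.continuousWithinAt
    · intro r hr
      rw [interior_Ioi] at hr
      have hr' : 0 < r := hr
      rw [(hder θ r hr').deriv]
      apply div_neg_of_neg_of_pos _ (by positivity)
      have h := hneg (r • θ)
      rw [real_inner_smul_left, real_inner_comm] at h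
      nlinarith [mul_pos hr' (neg_pos.2 h)]
  refine ⟨hanti, ?_⟩
  intro x hx
  have hx0 : 0 < ‖x‖ := by linarith
  have hn1 : ‖(‖x‖⁻¹ • x)‖ = 1 := by
    rw [norm_smul, norm_inv, norm_norm]; field_simp
  have hm := (hanti _ hn1).antitoneOn (a := 1) (b := ‖x‖) (by simp) hx0 hx
  have hxx : ‖x‖ • (‖x‖⁻¹ • x) = x := by
    rw [smul_smul, mul_inv_cancel₀ hx0.ne', one_smul]
  simp only [hxx, one_smul, one_pow, div_one] at hm
  rw [div_le_iff₀ (by positivity)] at hm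
  refine hm.trans (mul_le_mul_of_nonneg_right ?_ (by positivity))
  have hb : BddAbove (Set.range fun y : Metric.sphere (0 : EuclideanSpace ℝ (Fin n)) 1 => u ↑y) :=
    (isCompact_range (hu.continuous.comp continuous_subtype_val)).bddAbove
  exact le_ciSup hb ⟨‖x‖⁻¹ • x, by simpa using hn1⟩
end
end

section
/- Let n ≥ 1, 0 < a < 1 and b = √(1 − a²). Let u : ℝⁿ → ℝ be a C² function with D²u(x) > −(a+b)I for all x ∈ ℝⁿ, satisfying (√(a²+1)/b) · Σ_{i=1}^n arctan((λ_i(D²u(x)) + a − b)/(λ_i(D²u(x)) + a + b)) = −u(x) + (1/2)⟨x, Du(x)⟩ for all x ∈ ℝⁿ. Then u has at most quadratic growth: |u(x)| ≤ ( max_{|y|=1} |u(y)| + nπ√(a²+1)/(2b) ) · |x|² for all x with |x| ≥ 1. -/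
open Real Filter Matrix
open scoped RealInnerProductSpace

noncomputable section

theorem growth_aux (φ φ' : ℝ → ℝ) (C : ℝ) (hC : 0 ≤ C)
    (hφ : ∀ r, HasDerivAt φ (φ' r) r)
    (hb : ∀ r, -φ r + (1/2) * (r * φ' r) ≤ C) (r : ℝ) (hr : 1 ≤ r) :
    φ r ≤ (φ 1 + C) * r ^ 2 := by
  have key : ∀ t : ℝ, 1 ≤ t → HasDerivAt (fun t => (φ t + C) / t ^ 2)
      ((φ' t * t ^ 2 - (φ t + C) * (2 * t)) / (t ^ 2) ^ 2) t := by
    intro t ht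
    have h1 : HasDerivAt (fun t : ℝ => t ^ 2) (2 * t) t := by
      simpa using hasDerivAt_pow 2 t
    exact ((hφ t).add_const C).div h1 (by positivity)
  have anti : AntitoneOn (fun t => (φ t + C) / t ^ 2) (Set.Ici 1) := by
    apply antitoneOn_of_deriv_nonpos (convex_Ici 1)
    · intro t ht
      exact (key t ht).continuousAt.continuousWithinAt
    · intro t ht
      rw [interior_Ici] at ht
      exact (key t (le_of_lt ht)).differentiableAt.differentiableWithinAt
    · intro t ht
      rw [interior_Ici] at ht
      have ht' : 1 < t := ht
      rw [(key t ht'.le).deriv]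
      apply div_nonpos_of_nonpos_of_nonneg _ (by positivity)
      have := hb t
      nlinarith [mul_nonneg (by linarith : (0:ℝ) ≤ t) (sub_nonneg.2 this)]
  have h := anti (Set.mem_Ici.2 le_rfl) (Set.mem_Ici.2 hr) hr
  simp only [one_pow, div_one] at h
  rw [div_le_iff₀ (by positivity)] at h
  linarith

theorem quadratic_growth_arctan_case (n : ℕ) (hn : 1 ≤ n) (a b : ℝ)
    (ha0 : 0 < a) (ha1 : a < 1) (hb : b = Real.sqrt (1 - a ^ 2))
    (u : EuclideanSpace ℝ (Fin n) → ℝ)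
    (hu : ContDiff ℝ 2 u)
    (hadm : ∀ x, (Hess n u x + (a + b) • (1 : Matrix (Fin n) (Fin n) ℝ)).PosDef)
    (heq : ∀ x, (Real.sqrt (a ^ 2 + 1) / b) *
        ∑ i, Real.arctan ((eigs (Hess n u x) i + a - b) / (eigs (Hess n u x) i + a + b))
      = -u x + (1/2) * ⟪x, gradient u x⟫) :
    ∀ x : EuclideanSpace ℝ (Fin n), 1 ≤ ‖x‖ →
      |u x| ≤ ((⨆ y : Metric.sphere (0 : EuclideanSpace ℝ (Fin n)) 1, |u ↑y|)
        + n * π * Real.sqrt (a ^ 2 + 1) / (2 * b)) * ‖x‖ ^ 2 := by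
  intro x hx
  have hbpos : 0 < b := by
    rw [hb]; apply Real.sqrt_pos.2; nlinarith
  set C : ℝ := n * π * Real.sqrt (a ^ 2 + 1) / (2 * b) with hCdef
  have hC : 0 ≤ C := by positivity
  have hF : ∀ z, |-u z + (1/2) * ⟪z, gradient u z⟫| ≤ C := by
    intro z
    rw [← heq z, abs_mul, abs_of_nonneg (by positivity)]
    have h1 : |∑ i, Real.arctan ((eigs (Hess n u z) i + a - b) / (eigs (Hess n u z) i + a + b))|
        ≤ n * (π / 2) := by
      refine (Finset.abs_sum_le_sum_abs _ _).trans ?_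
      refine (Finset.sum_le_card_nsmul _ _ (π / 2) ?_).trans ?_
      · intro i _
        exact abs_le.2 ⟨(Real.neg_pi_div_two_lt_arctan _).le, (Real.arctan_lt_pi_div_two _).le⟩
      · simp
    calc _ ≤ Real.sqrt (a ^ 2 + 1) / b * (n * (π / 2)) :=
          mul_le_mul_of_nonneg_left h1 (by positivity)
      _ = C := by rw [hCdef]; field_simp
  have hx0 : 0 < ‖x‖ := by linarith
  set y : EuclideanSpace ℝ (Fin n) := ‖x‖⁻¹ • x with hy
  have hyn : ‖y‖ = 1 := by
    rw [hy, norm_smul, norm_inv, norm_norm, inv_mul_cancel₀ hx0.ne']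
  have hxy : ‖x‖ • y = x := by
    rw [hy, smul_smul, mul_inv_cancel₀ hx0.ne', one_smul]
  have hd : ∀ r : ℝ, HasDerivAt (fun r : ℝ => u (r • y)) ⟪y, gradient u (r • y)⟫ r := by
    intro r
    have hdiff : DifferentiableAt ℝ u (r • y) := (hu.differentiable (by norm_num)) _
    have h1 := hdiff.hasGradientAt.hasFDerivAt
    have h2 : HasDerivAt (fun r : ℝ => r • y) y r := by
      simpa using (hasDerivAt_id r).smul_const y
    have h3 := h1.comp_hasDerivAt r h2
    simpa [real_inner_comm, Function.comp_def] using h3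
  have hE : ∀ r : ℝ, |-u (r • y) + (1/2) * (r * ⟪y, gradient u (r • y)⟫)| ≤ C := by
    intro r
    have := hF (r • y)
    rwa [real_inner_smul_left] at this
  have hup := growth_aux _ _ C hC hd (fun r => (abs_le.1 (hE r)).2) ‖x‖ hx
  have hlo := growth_aux _ _ C hC (fun r => (hd r).neg)
    (fun r => by
      have := (abs_le.1 (hE r)).1
      simp only [Pi.neg_apply]
      linarith) ‖x‖ hx
  simp only [Pi.neg_apply, one_smul, hxy] at hup hlo
  have hsup : |u y| ≤ ⨆ y : Metric.sphere (0 : EuclideanSpace ℝ (Fin n)) 1, |u ↑y| := by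
    have hbdd : BddAbove (Set.range
        fun y : Metric.sphere (0 : EuclideanSpace ℝ (Fin n)) 1 => |u ↑y|) := by
      apply IsCompact.bddAbove
      apply isCompact_range
      exact (hu.continuous.comp continuous_subtype_val).abs
    exact le_ciSup hbdd ⟨y, by simp [hyn]⟩
  have hs := abs_le.1 hsup
  have hsq : 0 ≤ ‖x‖ ^ 2 := by positivity
  rw [abs_le]
  constructor
  · have := mul_le_mul_of_nonneg_right (add_le_add_left (neg_le.1 hs.1) C) hsq
    linarith
  · have := mul_le_mul_of_nonneg_right (add_le_add_left hs.2 C) hsq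
    linarith
end
end

section
/- Let n ≥ 1, a > 1 and b = √(a² − 1). Let w : ℝⁿ → ℝ be a smooth strictly convex function (M(x) := D²w(x) positive definite for all x) satisfying (√(a²+1)/(2b)) · Σ_{i=1}^n ln( λ_i(D²w(x)) / (λ_i(D²w(x)) + 2b) ) = −w(x) + (1/2)⟨x, Dw(x)⟩ for all x ∈ ℝⁿ. Define the phase φ(x) := −w(x) + (1/2)⟨x, Dw(x)⟩. Then φ(x) < 0 for all x, and φ satisfies the linear elliptic equation √(a²+1) · tr( (M(x)(M(x) + 2bI))^{−1} · D²φ(x) ) − (1/2)⟨x, Dφ(x)⟩ = 0 for all x ∈ ℝⁿ. -/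
open Real Filter Matrix
open scoped RealInnerProductSpace

noncomputable section

lemma aux_det_add {n : ℕ} {A : Matrix (Fin n) (Fin n) ℝ} (hA : A.IsHermitian) (c : ℝ) :
    (A + c • (1 : Matrix (Fin n) (Fin n) ℝ)).det = ∏ i, (eigs A i + c) := by
  have h1 := Matrix.eval_charpoly A (-c)
  rw [hA.charpoly_eq, Polynomial.eval_prod] at h1
  have h2 : Matrix.scalar (Fin n) (-c) - A = -(A + c • (1 : Matrix (Fin n) (Fin n) ℝ)) := by
    ext i j
    simp [Matrix.scalar_apply, Matrix.diagonal_apply, Matrix.one_apply]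
    split_ifs <;> ring
  rw [h2, Matrix.det_neg] at h1
  have h3 : ∀ i, Polynomial.eval (-c) (Polynomial.X - Polynomial.C ((hA.eigenvalues i : ℝ)))
      = -1 * (hA.eigenvalues i + c) := by
    intro i; simp; ring
  have h4 : eigs A = hA.eigenvalues := dif_pos hA
  simp only [RCLike.ofReal_real_eq_id, id] at h1
  rw [Finset.prod_congr rfl (fun i _ => h3 i), Finset.prod_mul_distrib] at h1
  rw [h4]
  simp only [Finset.prod_const, Finset.card_univ] at h1
  exact (mul_left_cancel₀ (by simp) h1).symm

lemma aux_det_deriv {n : ℕ} (M : ℝ → Matrix (Fin n) (Fin n) ℝ) (N : Matrix (Fin n) (Fin n) ℝ)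
    (t : ℝ) (h : ∀ i j, HasDerivAt (fun s => M s i j) (N i j) t) :
    HasDerivAt (fun s => (M s).det) (((M t).adjugate * N).trace) t := by
  have e : ((M t).adjugate * N).trace = ∑ σ : Equiv.Perm (Fin n), ((Equiv.Perm.sign σ : ℤ) : ℝ) *
      ∑ i, (∏ j ∈ Finset.univ.erase i, M t (σ j) j) • N (σ i) i := by
    simp_rw [Finset.mul_sum]
    rw [Finset.sum_comm]
    simp only [Matrix.trace, Matrix.diag]
    refine Finset.sum_congr rfl fun i _ => ?_
    have : ((M t).adjugate * N) i i = ((M t).updateCol i (fun k => N k i)).det := by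
      rw [← Matrix.cramer_apply, Matrix.cramer_eq_adjugate_mulVec]
      rfl
    rw [this, Matrix.det_apply']
    refine Finset.sum_congr rfl fun σ _ => ?_
    congr 1
    rw [← Finset.prod_erase_mul _ _ (Finset.mem_univ i)]
    simp only [Matrix.updateCol_self, smul_eq_mul]
    congr 1
    refine Finset.prod_congr rfl fun j hj => ?_
    rw [Matrix.updateCol_ne (Finset.ne_of_mem_erase hj)]
  rw [e]
  simp_rw [Matrix.det_apply']
  refine HasDerivAt.fun_sum fun σ _ => ?_
  refine HasDerivAt.const_mul _ ?_
  exact HasDerivAt.fun_finsetProd fun i _ => h (σ i) i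

lemma aux_logdet_deriv {n : ℕ} (M : ℝ → Matrix (Fin n) (Fin n) ℝ) (N : Matrix (Fin n) (Fin n) ℝ)
    (t : ℝ) (h : ∀ i j, HasDerivAt (fun s => M s i j) (N i j) t) (hd : (M t).det ≠ 0) :
    HasDerivAt (fun s => Real.log (M s).det) (((M t)⁻¹ * N).trace) t := by
  have := (aux_det_deriv M N t h).log hd
  convert this using 1
  rw [Matrix.inv_def, Ring.inverse_eq_inv', Matrix.smul_mul, Matrix.trace_smul, smul_eq_mul]
  ring

lemma aux_resolvent {n : ℕ} (A : Matrix (Fin n) (Fin n) ℝ) (c : ℝ)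
    (h1 : A.det ≠ 0) (h2 : (A + c • (1 : Matrix (Fin n) (Fin n) ℝ)).det ≠ 0) :
    A⁻¹ - (A + c • (1 : Matrix (Fin n) (Fin n) ℝ))⁻¹
      = c • (A * (A + c • (1 : Matrix (Fin n) (Fin n) ℝ)))⁻¹ := by
  set B := A + c • (1 : Matrix (Fin n) (Fin n) ℝ) with hB
  have u1 : IsUnit A.det := isUnit_iff_ne_zero.2 h1
  have u2 : IsUnit B.det := isUnit_iff_ne_zero.2 h2
  have hc : c • (1 : Matrix (Fin n) (Fin n) ℝ) = B - A := by rw [hB]; simp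
  rw [Matrix.mul_inv_rev]
  have : c • (B⁻¹ * A⁻¹) = B⁻¹ * (c • (1 : Matrix (Fin n) (Fin n) ℝ)) * A⁻¹ := by simp
  rw [this, hc, Matrix.mul_sub, Matrix.sub_mul, Matrix.nonsing_inv_mul _ u2, Matrix.one_mul,
    Matrix.mul_assoc, Matrix.mul_nonsing_inv _ u1, Matrix.mul_one]

lemma aux_hess {n : ℕ} (u : EuclideanSpace ℝ (Fin n) → ℝ) (x : EuclideanSpace ℝ (Fin n))
    (i j : Fin n) : Hess n u x i j =
      fderiv ℝ (fderiv ℝ u) x (EuclideanSpace.single i 1) (EuclideanSpace.single j 1) := by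
  simp [Hess, iteratedFDeriv_two_apply]

lemma aux_phase {n : ℕ} (w φ : EuclideanSpace ℝ (Fin n) → ℝ)
    (hw : ContDiff ℝ (⊤ : ℕ∞) w)
    (hφ : ∀ x, φ x = -w x + (1/2) * ⟪x, gradient w x⟫) :
    Differentiable ℝ φ ∧ (∀ x u v, fderiv ℝ (fderiv ℝ φ) x u v =
      (1/2) * fderiv ℝ (fderiv ℝ (fderiv ℝ w)) x x u v) := by
  have hF : ContDiff ℝ (⊤ : ℕ∞) (fderiv ℝ w) := hw.fderiv_right (by simp)
  have hH : ContDiff ℝ (⊤ : ℕ∞) (fderiv ℝ (fderiv ℝ w)) := hF.fderiv_right (by simp)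
  have dw := fun y => (hw.differentiable (by simp) y).hasFDerivAt
  have dF := fun y => (hF.differentiable (by simp) y).hasFDerivAt
  have dH := fun y => (hH.differentiable (by simp) y).hasFDerivAt
  have s1 : ∀ y u v, fderiv ℝ (fderiv ℝ w) y u v = fderiv ℝ (fderiv ℝ w) y v u := fun y =>
    (hw.contDiffAt (x := y)).isSymmSndFDerivAt (by
      rw [minSmoothness_of_isRCLikeNormedField]
      exact WithTop.coe_le_coe.2 (le_top : (2 : ℕ∞) ≤ ⊤))
  have s2 : ∀ y u v, fderiv ℝ (fderiv ℝ (fderiv ℝ w)) y u v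
      = fderiv ℝ (fderiv ℝ (fderiv ℝ w)) y v u := fun y =>
    (hF.contDiffAt (x := y)).isSymmSndFDerivAt (by
      rw [minSmoothness_of_isRCLikeNormedField]
      exact WithTop.coe_le_coe.2 (le_top : (2 : ℕ∞) ≤ ⊤))
  have hφ' : φ = fun y => -w y + (1/2) * fderiv ℝ w y y := by
    funext y
    rw [hφ, real_inner_comm, gradient, InnerProductSpace.toDual_symm_apply]
  have d1 : ∀ y, HasFDerivAt φ ((-1/2 : ℝ) • fderiv ℝ w y
      + (1/2 : ℝ) • fderiv ℝ (fderiv ℝ w) y y) y := by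
    intro y
    rw [hφ']
    have := (dw y).neg.add (((dF y).clm_apply (hasFDerivAt_id y)).const_mul (1/2 : ℝ))
    refine this.congr_fderiv ?_
    ext v
    simp [s1 y v y]
    ring
  refine ⟨fun y => (d1 y).differentiableAt, fun x u v => ?_⟩
  have e : fderiv ℝ φ = fun y => (-1/2 : ℝ) • fderiv ℝ w y
      + (1/2 : ℝ) • fderiv ℝ (fderiv ℝ w) y y := funext fun y => (d1 y).fderiv
  have d2 := ((dF x).const_smul (-1/2 : ℝ)).add
    (((dH x).clm_apply (hasFDerivAt_id x)).const_smul (1/2 : ℝ))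
  rw [e]
  erw [d2.fderiv]
  simp [s2 x u x]
  ring

theorem phase_is_negative_and_satisfies_elliptic_equation (n : ℕ) (hn : 1 ≤ n) (a b : ℝ)
    (ha : 1 < a) (hb : b = Real.sqrt (a ^ 2 - 1))
    (w : EuclideanSpace ℝ (Fin n) → ℝ)
    (hw : ContDiff ℝ (⊤ : ℕ∞) w)
    (hconv : ∀ x, (Hess n w x).PosDef)
    (heq : ∀ x, (Real.sqrt (a ^ 2 + 1) / (2 * b)) *
        ∑ i, Real.log (eigs (Hess n w x) i / (eigs (Hess n w x) i + 2 * b))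
      = -w x + (1/2) * ⟪x, gradient w x⟫)
    (φ : EuclideanSpace ℝ (Fin n) → ℝ)
    (hφ : ∀ x, φ x = -w x + (1/2) * ⟪x, gradient w x⟫) :
    ∀ x, φ x < 0 ∧
      Real.sqrt (a ^ 2 + 1) *
        Matrix.trace ((Hess n w x * (Hess n w x + (2 * b) • (1 : Matrix (Fin n) (Fin n) ℝ)))⁻¹
          * Hess n φ x)
        - (1/2) * ⟪x, gradient φ x⟫ = 0 := by
  have hbpos : 0 < b := by rw [hb]; apply Real.sqrt_pos.2; nlinarith
  have hs : 0 < Real.sqrt (a ^ 2 + 1) := Real.sqrt_pos.2 (by positivity)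
  have hep : ∀ x i, 0 < eigs (Hess n w x) i := by
    intro x i
    have h4 : eigs (Hess n w x) = (hconv x).1.eigenvalues := dif_pos (hconv x).1
    rw [h4]; exact (hconv x).eigenvalues_pos i
  have hd1 : ∀ x, (Hess n w x).det = ∏ i, eigs (Hess n w x) i := by
    intro x; simpa using aux_det_add (hconv x).1 0
  have hd2 := fun x => aux_det_add (hconv x).1 (2 * b)
  have hp1 : ∀ x, (Hess n w x).det ≠ 0 := fun x => by
    rw [hd1]; exact (Finset.prod_pos fun i _ => hep x i).ne'
  have hp2 : ∀ x, (Hess n w x + (2 * b) • (1 : Matrix (Fin n) (Fin n) ℝ)).det ≠ 0 := fun x => by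
    rw [hd2]; exact (Finset.prod_pos fun i _ => by have := hep x i; positivity).ne'
  have hφlog : ∀ x, φ x = (Real.sqrt (a ^ 2 + 1) / (2 * b)) * (Real.log (Hess n w x).det
      - Real.log (Hess n w x + (2 * b) • (1 : Matrix (Fin n) (Fin n) ℝ)).det) := by
    intro x
    rw [hφ, ← heq, hd1, hd2, Real.log_prod (fun i _ => (hep x i).ne'),
      Real.log_prod (fun i _ => by have := hep x i; positivity), ← Finset.sum_sub_distrib]
    congr 1
    refine Finset.sum_congr rfl fun i _ => ?_
    have := hep x i
    rw [Real.log_div this.ne' (by positivity)]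
  obtain ⟨hdφ, hφ2⟩ := aux_phase w φ hw hφ
  intro x
  constructor
  · rw [hφ, ← heq]
    have : Nonempty (Fin n) := ⟨⟨0, hn⟩⟩
    refine mul_neg_of_pos_of_neg (by positivity) ?_
    refine Finset.sum_neg (fun i _ => ?_) Finset.univ_nonempty
    have := hep x i
    refine Real.log_neg (by positivity) ?_
    rw [div_lt_one (by positivity)]
    linarith
  · have hF : ContDiff ℝ (⊤ : ℕ∞) (fderiv ℝ w) := hw.fderiv_right (by simp)
    have hH : ContDiff ℝ (⊤ : ℕ∞) (fderiv ℝ (fderiv ℝ w)) := hF.fderiv_right (by simp)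
    have hline : HasDerivAt (fun t : ℝ => x + t • x) x 0 := by
      simpa using ((hasDerivAt_id (0 : ℝ)).smul_const x).const_add x
    have hx0 : x + (0 : ℝ) • x = x := by simp
    set N : Matrix (Fin n) (Fin n) ℝ := (2 : ℝ) • Hess n φ x with hN
    have hM : ∀ i j, HasDerivAt (fun t : ℝ => Hess n w (x + t • x) i j) (N i j) 0 := by
      intro i j
      have dH := (hH.differentiable (by simp) (x + (0 : ℝ) • x)).hasFDerivAt
      have h1 := dH.comp_hasDerivAt (0 : ℝ) hline
      have h2 := (h1.clm_apply (hasDerivAt_const (0 : ℝ) (EuclideanSpace.single i (1 : ℝ)))).clm_apply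
        (hasDerivAt_const (0 : ℝ) (EuclideanSpace.single j (1 : ℝ)))
      simp only [aux_hess]
      refine h2.congr_deriv ?_
      rw [hN, Matrix.smul_apply, aux_hess, hφ2]
      simp
    have hM2 : ∀ i j, HasDerivAt (fun t : ℝ => (Hess n w (x + t • x)
        + (2 * b) • (1 : Matrix (Fin n) (Fin n) ℝ)) i j) (N i j) 0 := by
      intro i j
      exact (hM i j).add_const _
    have l1 := aux_logdet_deriv (fun t : ℝ => Hess n w (x + t • x)) N 0 hM (hp1 _)
    have l2 := aux_logdet_deriv (fun t : ℝ => Hess n w (x + t • x)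
        + (2 * b) • (1 : Matrix (Fin n) (Fin n) ℝ)) N 0 hM2 (hp2 _)
    have l3 := (l1.sub l2).const_mul (Real.sqrt (a ^ 2 + 1) / (2 * b))
    have l4 : HasDerivAt (fun t : ℝ => φ (x + t • x)) (fderiv ℝ φ x x) 0 := by
      have := (hdφ (x + (0 : ℝ) • x)).hasFDerivAt.comp_hasDerivAt (0 : ℝ) hline
      rw [hx0] at this
      exact this
    have l5 : HasDerivAt (fun t : ℝ => φ (x + t • x)) _ 0 :=
      l3.congr_of_eventuallyEq (Eventually.of_forall fun t => hφlog _)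
    have key := l4.unique l5
    simp only [hx0] at key
    rw [← Matrix.trace_sub, ← Matrix.sub_mul, aux_resolvent _ _ (hp1 x) (hp2 x), hN,
      Matrix.smul_mul, Matrix.mul_smul, Matrix.trace_smul, Matrix.trace_smul] at key
    rw [real_inner_comm, gradient, InnerProductSpace.toDual_symm_apply, key]
    simp only [smul_eq_mul]
    field_simp
    ring
end
end
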